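/- arXiv:2206.08925 — 2 statements merged into one kernel-verified Lean document; each statement's English description precedes it below -/
import Mathlib

section
/- Let I ⊆ K[x₁,…,x_n] be a B_n-invariant ideal and P ∈ I of degree d. Let m be a monomial occurring in P_d, the homogeneous component of P of degree d, and assume wt(P_d) + d₁ + d₂ ≤ n (notation below). Then the B_n-Specht ideal I_{Γ*(m)} is contained in I. -/
/-!
Why the statement holds. A `B_n`-Specht polynomial is, up to sign, the antisymmetrisation over the
column stabiliser of the staircase monomial with exponents `0, 2, 4, …` down each column of the
first tableau and `1, 3, 5, …` down each column of the second (`det_blockMat`: this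
antisymmetrisation is the determinant of a block diagonal matrix, each block being a Vandermonde
matrix in the squared variables times a diagonal matrix).

The columns of the shape `Γ*(m)` have heights `k_i + 1` and `r_i + 1`, together with columns of
height one. So the variables occurring in `P_d` can be moved by a permutation to the bottoms of
columns so that their exponents in `m` are exactly the staircase exponents there; the variables of
`P_d` missing from `m` need columns of height one, and the bound on `wt(P_d) + d₁ + d₂` says that
there are enough of them (`exists_perm_of_card_le`). All other cells are then filled with variables
not occurring in `P_d`. Multiply `P` by the staircase monomial `y` of these other cells and call
the result `Q`, so that `m * y` is the full staircase.

Averaging over sign changes keeps the monomials of `Q` with the parities of the staircase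
(`exists_parity_proj`), and antisymmetrisation kills every monomial with a repeated exponent in some
column (`det_blockMat_eq_zero`). A surviving monomial has at least the degree of the staircase
(`sum_rows_le`), while `Q` has at most that degree. Hence it comes from `P_d`, agrees with the
staircase off the bottom cells, and must be the staircase itself (`eq_staircase`). The outcome is
the coefficient of `m` times the Specht polynomial, and it lies in `I` (`blockPoly_mem`).
-/

namespace SpechtBn

/-- `f` lists the parts of a partition (0-indexed: part `j+1` of the paper is `f j`),
with at most `n` parts. -/
def IsPartitionFun (n : ℕ) (f : ℕ → ℕ) : Prop :=
  Antitone f ∧ ∀ i, n ≤ i → f i = 0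

/-- the pair of part functions `(f, g)` forms a bipartition of `n`. -/
def IsBP (n : ℕ) (f g : ℕ → ℕ) : Prop :=
  IsPartitionFun n f ∧ IsPartitionFun n g ∧ (∑ i ∈ Finset.range n, (f i + g i)) = n

/-- A bipartition of `n`, given by the 0-indexed part functions of its two components. -/
structure Bipartition (n : ℕ) where
  l : ℕ → ℕ
  m : ℕ → ℕ
  isBP : IsBP n l m

/-- Bidominance on pairs of part functions: `(l₁,m₁) ⊴ (l₂,m₂)`. -/
def BidomFun (l₁ m₁ l₂ m₂ : ℕ → ℕ) : Prop :=
  (∀ k, ∑ j ∈ Finset.range k, (l₁ j + m₁ j) ≤ ∑ j ∈ Finset.range k, (l₂ j + m₂ j)) ∧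
  (∀ k, (∑ j ∈ Finset.range k, (l₁ j + m₁ j)) + l₁ k
      ≤ (∑ j ∈ Finset.range k, (l₂ j + m₂ j)) + l₂ k)

/-- `Bidom q p` : the bipartition `q` is bidominated by `p`, i.e. `q ⊴ p`. -/
def Bidom {n : ℕ} (q p : Bipartition n) : Prop := BidomFun q.l q.m p.l p.m

/-- Dominance order on part functions: `DomFun f g` means `f ⊴ g`. -/
def DomFun (f g : ℕ → ℕ) : Prop :=
  ∀ k, ∑ j ∈ Finset.range k, f j ≤ ∑ j ∈ Finset.range k, g j

/-- `g` covers `f` in the dominance order on partitions (of the same size, with ≤ `n` parts). -/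
def DomCovers (n : ℕ) (g f : ℕ → ℕ) : Prop :=
  IsPartitionFun n g ∧ IsPartitionFun n f ∧ DomFun f g ∧ f ≠ g ∧
  ∀ h : ℕ → ℕ, IsPartitionFun n h →
    (∑ j ∈ Finset.range n, h j) = (∑ j ∈ Finset.range n, f j) →
    DomFun f h → DomFun h g → h = f ∨ h = g

/-- `p` covers `q` in the bidominance order on bipartitions of `n`. -/
def BPCovers {n : ℕ} (p q : Bipartition n) : Prop :=
  Bidom q p ∧ q ≠ p ∧ ∀ r : Bipartition n, Bidom q r → Bidom r p → r = q ∨ r = p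

/-- number of positive parts of `f` (among the first `n`). -/
def lenF (n : ℕ) (f : ℕ → ℕ) : ℕ := ((Finset.range n).filter fun i => 1 ≤ f i).card

/-- the cells `(row, column)` of the Young diagram of `f` (0-indexed). -/
def cellsF (n : ℕ) (f : ℕ → ℕ) : Finset (ℕ × ℕ) :=
  (Finset.range n ×ˢ Finset.range n).filter fun c => c.2 < f c.1

/-- ordered pairs of cells lying in the same column, the first strictly above the second. -/
def colPairs (n : ℕ) (f : ℕ → ℕ) : Finset ((ℕ × ℕ) × (ℕ × ℕ)) :=
  ((cellsF n f) ×ˢ (cellsF n f)).filter fun q => q.1.2 = q.2.2 ∧ q.1.1 < q.2.1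

/-- A bitableau of shape `(f,g)`: a filling of the pair of Young diagrams with the
numbers `1,…,n` (here: the elements of `Fin n`), each used exactly once. -/
structure Bitableau (n : ℕ) (f g : ℕ → ℕ) where
  left : ℕ × ℕ → Fin n
  right : ℕ × ℕ → Fin n
  bij : ∀ k : Fin n, ∃! c : (ℕ × ℕ) ⊕ (ℕ × ℕ),
      Sum.elim (fun c => c ∈ cellsF n f ∧ left c = k)
               (fun c => c ∈ cellsF n g ∧ right c = k) c

/-- A tableau of shape `f`: a filling of the Young diagram of `f` with the elements
of `Fin n`, each used exactly once. -/
structure Tableau (n : ℕ) (f : ℕ → ℕ) where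
  entry : ℕ × ℕ → Fin n
  bij : ∀ k : Fin n, ∃! c : ℕ × ℕ, c ∈ cellsF n f ∧ entry c = k

open MvPolynomial in
/-- The `B_n`-Specht polynomial of a bitableau. -/
noncomputable def speB (n : ℕ) (K : Type*) [CommRing K] {f g : ℕ → ℕ}
    (bt : Bitableau n f g) : MvPolynomial (Fin n) K :=
  (∏ q ∈ colPairs n f, (X (bt.left q.1) ^ 2 - X (bt.left q.2) ^ 2)) *
  (∏ q ∈ colPairs n g, (X (bt.right q.1) ^ 2 - X (bt.right q.2) ^ 2)) *
  ∏ c ∈ cellsF n g, X (bt.right c)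

open MvPolynomial in
/-- The `S_n`-Specht polynomial of a tableau. -/
noncomputable def speSn (n : ℕ) (K : Type*) [CommRing K] {f : ℕ → ℕ}
    (U : Tableau n f) : MvPolynomial (Fin n) K :=
  ∏ q ∈ colPairs n f, (X (U.entry q.1) - X (U.entry q.2))

/-- The set of all `B_n`-Specht polynomials of shape `(f,g)`. -/
def spechtSet (n : ℕ) (K : Type*) [CommRing K] (f g : ℕ → ℕ) :
    Set (MvPolynomial (Fin n) K) :=
  {P | ∃ bt : Bitableau n f g, P = speB n K bt}

/-- The `B_n`-Specht ideal of shape `(f,g)`. -/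
noncomputable def spechtIdeal (n : ℕ) (K : Type*) [CommRing K] (f g : ℕ → ℕ) :
    Ideal (MvPolynomial (Fin n) K) :=
  Ideal.span (spechtSet n K f g)

/-- The `B_n`-Specht variety of shape `(f,g)`. -/
def spechtVariety (n : ℕ) (K : Type*) [CommRing K] (f g : ℕ → ℕ) : Set (Fin n → K) :=
  {z | ∀ P ∈ spechtIdeal n K f g, MvPolynomial.eval z P = 0}

/-- The `S_n`-orbit type of `z`: the multiplicities of the distinct values occurring among
the coordinates of `z`, sorted decreasingly (0-indexed part function). -/
noncomputable def snType {K : Type*} {n : ℕ} (z : Fin n → K) : ℕ → ℕ := fun j =>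
  letI := Classical.decEq K
  (((Finset.univ.image z).val.map fun v =>
      (Finset.univ.filter fun i => z i = v).card).sort (· ≤ ·)).reverse.getD j 0

/-- The index `j-1` (0-indexed) used in the definition of the `t`-cut. -/
def cutIdx (n : ℕ) (f : ℕ → ℕ) (t : ℕ) : ℕ :=
  ((Finset.range n).filter fun i => t ≤ f i ∧ 1 ≤ f i).card

/-- First component `ρ` of the `t`-cut of `f`. -/
def cutFst (n : ℕ) (f : ℕ → ℕ) (t : ℕ) : ℕ → ℕ :=
  fun i => if i < cutIdx n f t then t else f i

/-- Second component `σ` of the `t`-cut of `f`. -/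
def cutSnd (n : ℕ) (f : ℕ → ℕ) (t : ℕ) : ℕ → ℕ :=
  fun i => if i < cutIdx n f t then f i - t else 0

/-- the number of zero coordinates of `z`. -/
noncomputable def zeroCount {K : Type*} [Zero K] {n : ℕ} (z : Fin n → K) : ℕ :=
  letI := Classical.decEq K
  (Finset.univ.filter fun i => z i = 0).card

/-- First component of the `B_n`-orbit type `Ω(z) = cut(Λ(z²), t_z)`. -/
noncomputable def omegaFst {K : Type*} [CommRing K] {n : ℕ} (z : Fin n → K) : ℕ → ℕ :=
  cutFst n (snType fun i => z i ^ 2) (zeroCount z)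

/-- Second component of the `B_n`-orbit type `Ω(z) = cut(Λ(z²), t_z)`. -/
noncomputable def omegaSnd {K : Type*} [CommRing K] {n : ℕ} (z : Fin n → K) : ℕ → ℕ :=
  cutSnd n (snType fun i => z i ^ 2) (zeroCount z)

/-- The `B_n`-orbit set `H_{(f,g)}`. -/
def orbitSet (n : ℕ) (K : Type*) [CommRing K] (f g : ℕ → ℕ) : Set (Fin n → K) :=
  {z | omegaFst z = f ∧ omegaSnd z = g}

/-- `τ` is a vector of signs. -/
def IsSigns {n : ℕ} {K : Type*} [One K] [Neg K] (τ : Fin n → K) : Prop :=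
  ∀ i, τ i = 1 ∨ τ i = -1

/-- The action of the element `(τ, ρ)` of the hyperoctahedral group `B_n` on polynomials,
sending `x_i` to `τ(ρ(i))·x_{ρ(i)}`. -/
noncomputable def bnAct (n : ℕ) (K : Type*) [CommRing K] (τ : Fin n → K)
    (ρ : Equiv.Perm (Fin n)) :
    MvPolynomial (Fin n) K →ₐ[K] MvPolynomial (Fin n) K :=
  MvPolynomial.aeval fun i => MvPolynomial.C (τ (ρ i)) * MvPolynomial.X (ρ i)

/-- `I` is a `B_n`-invariant ideal. -/
def BnInvariantIdeal (n : ℕ) (K : Type*) [CommRing K]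
    (I : Ideal (MvPolynomial (Fin n) K)) : Prop :=
  ∀ P ∈ I, ∀ τ : Fin n → K, IsSigns τ → ∀ ρ : Equiv.Perm (Fin n), bnAct n K τ ρ P ∈ I

/-- `P` is a `B_n`-invariant polynomial. -/
def BnInvariantPoly (n : ℕ) (K : Type*) [CommRing K] (P : MvPolynomial (Fin n) K) : Prop :=
  ∀ τ : Fin n → K, IsSigns τ → ∀ ρ : Equiv.Perm (Fin n), bnAct n K τ ρ P = P

/-- the decreasing rearrangement of a multiset of naturals, as a 0-indexed part function. -/
def sortedDesc (M : Multiset ℕ) : ℕ → ℕ := fun j => ((M.sort (· ≤ ·)).reverse).getD j 0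

/-- the conjugate (transpose) of the part function `f` (with at most `n` parts). -/
def conjF (n : ℕ) (f : ℕ → ℕ) : ℕ → ℕ :=
  fun c => ((Finset.range n).filter fun i => c < f i).card

/-- indices with positive even exponent in the monomial with exponent vector `e`. -/
def evenSupp {n : ℕ} (e : Fin n →₀ ℕ) : Finset (Fin n) :=
  Finset.univ.filter fun i => e i ≠ 0 ∧ Even (e i)

/-- indices with odd exponent in the monomial with exponent vector `e`. -/
def oddSupp {n : ℕ} (e : Fin n →₀ ℕ) : Finset (Fin n) :=
  Finset.univ.filter fun i => Odd (e i)

/-- `d₁ = Σ_{i∈I₁} k_i` for the monomial with exponent vector `e`. -/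
def d1F {n : ℕ} (e : Fin n →₀ ℕ) : ℕ := ∑ i ∈ evenSupp e, e i / 2

/-- `d₂ = Σ_{i∈I₂} r_i` for the monomial with exponent vector `e`. -/
def d2F {n : ℕ} (e : Fin n →₀ ℕ) : ℕ := ∑ i ∈ oddSupp e, e i / 2

/-- first component of the bipartition `Γ(m)` of the monomial with exponent vector `e`:
`(λ₁+1,…,λ_ℓ+1, 1,…,1)` with `n−(ℓ+s+d₁+d₂)` trailing ones. -/
def gammaFst {n : ℕ} (e : Fin n →₀ ℕ) : ℕ → ℕ := fun j =>
  if j < n - ((oddSupp e).card + d1F e + d2F e) then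
    max (sortedDesc ((evenSupp e).val.map fun i => e i / 2 + 1) j) 1
  else 0

/-- second component of the bipartition `Γ(m)`: `(μ₁+1,…,μ_s+1)`. -/
def gammaSnd {n : ℕ} (e : Fin n →₀ ℕ) : ℕ → ℕ :=
  sortedDesc ((oddSupp e).val.map fun i => e i / 2 + 1)

/-- first component of `Γ*(m)`, the conjugate of the first component of `Γ(m)`. -/
def gammaStarFst {n : ℕ} (e : Fin n →₀ ℕ) : ℕ → ℕ := conjF n (gammaFst e)

/-- second component of `Γ*(m)`, the conjugate of the second component of `Γ(m)`. -/
def gammaStarSnd {n : ℕ} (e : Fin n →₀ ℕ) : ℕ → ℕ := conjF n (gammaSnd e)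

/-- position, in the glued tableau, of column `j` of the left diagram: columns are sorted
by weakly decreasing height, left-diagram columns first among equal heights. -/
def gluePosL (n : ℕ) (f g : ℕ → ℕ) (j : ℕ) : ℕ :=
  j + ((Finset.range n).filter fun k => conjF n f j < conjF n g k).card

/-- position, in the glued tableau, of column `k` of the right diagram. -/
def gluePosR (n : ℕ) (f g : ℕ → ℕ) (k : ℕ) : ℕ :=
  k + ((Finset.range n).filter fun j => conjF n g k ≤ conjF n f j).card

/-- `U` is the glueing `T ⊎ S` of the bitableau `(T,S)`. -/
def IsGlue {n : ℕ} {f g : ℕ → ℕ} (bt : Bitableau n f g)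
    (U : Tableau n (fun i => f i + g i)) : Prop :=
  (∀ c ∈ cellsF n f, U.entry (c.1, gluePosL n f g c.2) = bt.left c) ∧
  (∀ c ∈ cellsF n g, U.entry (c.1, gluePosR n f g c.2) = bt.right c)

/-- extension of a finitely-presented part function to `ℕ → ℕ`. -/
def extendF {n : ℕ} (h : Fin n → Fin (n + 1)) : ℕ → ℕ :=
  fun i => if hi : i < n then (h ⟨i, hi⟩ : ℕ) else 0

/-- `Σ_{(ϑ,ω)∈BP_n, (ϑ,ω) ⋬ (lam,mu)} s_{ϑ,ω}²`, where `s_{ϑ,ω}` is the dimension of the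
span of the Specht polynomials of shape `(ϑ,ω)`. -/
noncomputable def sBound (n : ℕ) (K : Type*) [Field K] (lam mu : ℕ → ℕ) : ℕ :=
  letI : DecidablePred (fun q : (Fin n → Fin (n + 1)) × (Fin n → Fin (n + 1)) =>
      IsBP n (extendF q.1) (extendF q.2) ∧
        ¬ BidomFun (extendF q.1) (extendF q.2) lam mu) :=
    Classical.decPred _
  ∑ q ∈ Finset.univ.filter (fun q : (Fin n → Fin (n + 1)) × (Fin n → Fin (n + 1)) =>
      IsBP n (extendF q.1) (extendF q.2) ∧
        ¬ BidomFun (extendF q.1) (extendF q.2) lam mu),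
    (Module.finrank K (Submodule.span K (spechtSet n K (extendF q.1) (extendF q.2)))) ^ 2

end SpechtBn

namespace SpechtBn

/-! ### The block Vandermonde determinant -/

lemma row_lt_card {ι : Type*} [Fintype ι] (r : ι → ℕ)
    (hdown : ∀ i t, t < r i → ∃ j, r j = t) (i : ι) : r i < Fintype.card ι := by
  classical
  have h : Finset.range (r i + 1) ⊆ Finset.univ.image r := by
    intro t ht
    rcases Nat.lt_succ_iff_lt_or_eq.mp (Finset.mem_range.mp ht) with h | h
    · obtain ⟨j, hj⟩ := hdown i t h
      exact Finset.mem_image.mpr ⟨j, Finset.mem_univ _, hj⟩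
    · exact Finset.mem_image.mpr ⟨i, Finset.mem_univ _, h.symm⟩
  have h1 := Finset.card_le_card h
  have h2 : (Finset.univ.image r).card ≤ Fintype.card ι := Finset.card_image_le
  rw [Finset.card_range] at h1
  omega

/-- The Vandermonde determinant for an arbitrary index type, the exponents being given by an
injective `r` with downward closed image, that is, by a bijection onto an initial segment. -/
lemma det_vandermonde_of_rows {ι R : Type*} [Fintype ι] [DecidableEq ι] [CommRing R]
    (r : ι → ℕ) (hr : Function.Injective r)
    (hdown : ∀ i t, t < r i → ∃ j, r j = t) (v : ι → R) :
    (Matrix.of fun i j => v i ^ r j).det =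
      ∏ i, ∏ j, if r i < r j then v j - v i else 1 := by
  let φ : ι → Fin (Fintype.card ι) := fun i => ⟨r i, row_lt_card r hdown i⟩
  have hφ : Function.Bijective φ := by
    rw [Fintype.bijective_iff_injective_and_card]
    exact ⟨fun i j h => hr (by simpa [φ] using h), by simp⟩
  let ψ := Equiv.ofBijective φ hφ
  have h1 : (Matrix.of fun i j => v i ^ r j) =
      (Matrix.vandermonde (v ∘ ψ.symm)).submatrix ψ ψ := by
    ext i j
    simp only [Matrix.of_apply, Matrix.submatrix_apply, Matrix.vandermonde_apply,
      Function.comp_apply, Equiv.symm_apply_apply]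
    rfl
  rw [h1, Matrix.det_submatrix_equiv_self, Matrix.det_vandermonde, ← ψ.prod_comp]
  refine Finset.prod_congr rfl fun i _ => ?_
  rw [← Finset.filter_lt_eq_Ioi, Finset.prod_filter, ← ψ.prod_comp]
  refine Finset.prod_congr rfl fun j _ => ?_
  have h2 : ψ i < ψ j ↔ r i < r j := Iff.rfl
  simp [h2]

/-- The `B_n`-Specht polynomial, up to sign, in terms of coordinates on the set of variables:
`b i` is the label of the column (block) containing `i`, odd for columns of the second diagram,
and `r i` is the row of `i`. It is the product of the Vandermonde products in the squared
variables of each block and of all the variables lying in odd blocks. -/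
noncomputable def blockPoly {n : ℕ} (K : Type*) [CommRing K] (b r : Fin n → ℕ) :
    MvPolynomial (Fin n) K :=
  (∏ i, ∏ j, if b j = b i ∧ r i < r j then
      (MvPolynomial.X j ^ 2 - MvPolynomial.X i ^ 2 : MvPolynomial (Fin n) K) else 1) *
  ∏ i, MvPolynomial.X i ^ (b i % 2)

/-- The block diagonal matrix whose determinant is the antisymmetrisation, over the permutations
preserving the blocks of `b`, of the monomial with exponents `a`. -/
noncomputable def blockMat {n : ℕ} (K : Type*) [CommRing K] (b : Fin n → ℕ) (a : Fin n → ℕ) :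
    Matrix (Fin n) (Fin n) (MvPolynomial (Fin n) K) :=
  Matrix.of fun i j => if b i = b j then MvPolynomial.X i ^ a j else 0

/-- For the staircase exponents `0, 2, 4, …` in even blocks and `1, 3, 5, …` in odd blocks, the
determinant is a product of Vandermonde determinants in the squared variables. -/
lemma det_blockMat {n : ℕ} (K : Type*) [CommRing K] (b r : Fin n → ℕ)
    (hinj : ∀ i j, b i = b j → r i = r j → i = j)
    (hdown : ∀ i t, t < r i → ∃ j, b j = b i ∧ r j = t) :
    (blockMat K b fun k => 2 * r k + b k % 2).det = blockPoly K b r := by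
  have hbt : (blockMat K b fun k => 2 * r k + b k % 2).BlockTriangular b := by
    intro i j hij
    simp [blockMat, hij.ne']
  rw [hbt.det]
  have key : ∀ c, ((blockMat K b fun k => 2 * r k + b k % 2).toSquareBlock b c).det =
      ∏ i with b i = c, ((MvPolynomial.X i ^ (b i % 2) : MvPolynomial (Fin n) K) *
        ∏ j, if b j = b i ∧ r i < r j then
          (MvPolynomial.X j ^ 2 - MvPolynomial.X i ^ 2 : MvPolynomial (Fin n) K) else 1) := by
    intro c
    have h1 : (blockMat K b fun k => 2 * r k + b k % 2).toSquareBlock b c =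
        Matrix.of fun (i j : {k // b k = c}) => (MvPolynomial.X i.1 ^ (b i.1 % 2)) *
          (Matrix.of fun (i j : {k // b k = c}) =>
            ((MvPolynomial.X i.1 ^ 2 : MvPolynomial (Fin n) K)) ^ r j.1) i j := by
      ext1 i j
      have hij : b i.1 = b j.1 := i.2.trans j.2.symm
      simp only [Matrix.toSquareBlock_def, blockMat, Matrix.of_apply, hij, if_true]
      rw [← pow_mul, ← pow_add, add_comm]
    rw [h1, Matrix.det_mul_column, det_vandermonde_of_rows (fun j : {k // b k = c} => r j.1)]
    · rw [← Finset.prod_mul_distrib,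
        Finset.prod_subtype (p := fun k => b k = c) (Finset.univ.filter fun i => b i = c) (by simp)]
      refine Finset.prod_congr rfl fun i _ => ?_
      congr 1
      have : ∀ j, (if b j = b i.1 ∧ r i.1 < r j then
          (MvPolynomial.X j ^ 2 - MvPolynomial.X i.1 ^ 2 : MvPolynomial (Fin n) K) else 1) =
          if b j = c then (if r i.1 < r j then
          (MvPolynomial.X j ^ 2 - MvPolynomial.X i.1 ^ 2 : MvPolynomial (Fin n) K) else 1) else 1 := by
        intro j
        rw [i.2, ite_and]
      simp_rw [this]
      conv_rhs => rw [← Finset.prod_filter, Finset.prod_subtype (p := fun k => b k = c)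
        (Finset.univ.filter fun i => b i = c) (by simp)]
    · intro i j h
      exact Subtype.ext (hinj _ _ (i.2.trans j.2.symm) h)
    · intro i t ht
      obtain ⟨j, hj, hj'⟩ := hdown i.1 t ht
      exact ⟨⟨j, hj.trans i.2⟩, hj'⟩
  simp_rw [key]
  rw [Finset.prod_fiberwise_of_maps_to (fun i _ => Finset.mem_image_of_mem b (Finset.mem_univ i)),
    Finset.prod_mul_distrib, mul_comm]
  rfl

lemma det_blockMat_eq_zero {n : ℕ} (K : Type*) [CommRing K] (b a : Fin n → ℕ) {i j : Fin n}
    (hij : i ≠ j) (hb : b i = b j) (ha : a i = a j) : (blockMat K b a).det = 0 :=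
  Matrix.det_zero_of_column_eq hij fun k => by simp [blockMat, hb, ha]

/-! ### Sign averaging and antisymmetrisation -/

lemma bnAct_monomial {n : ℕ} (K : Type*) [CommRing K] (τ : Fin n → K)
    (σ : Equiv.Perm (Fin n)) (a : Fin n →₀ ℕ) (c : K) :
    bnAct n K τ σ (MvPolynomial.monomial a c) =
      MvPolynomial.C c * ∏ k, (MvPolynomial.C (τ (σ k)) * MvPolynomial.X (σ k)) ^ a k := by
  rw [bnAct, MvPolynomial.aeval_monomial, Finsupp.prod_fintype _ _ (by simp)]
  rfl

/-- Antisymmetrisation over the group of permutations preserving every block. -/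
noncomputable def antisym {n : ℕ} (K : Type*) [CommRing K] (b : Fin n → ℕ) :
    MvPolynomial (Fin n) K →ₗ[K] MvPolynomial (Fin n) K :=
  ∑ σ ∈ Finset.univ.filter (fun σ : Equiv.Perm (Fin n) => ∀ k, b (σ k) = b k),
    (Equiv.Perm.sign σ : ℤ) • (bnAct n K 1 σ).toLinearMap

lemma antisym_mem {n : ℕ} {K : Type*} [CommRing K] (b : Fin n → ℕ)
    {I : Ideal (MvPolynomial (Fin n) K)} (hI : BnInvariantIdeal n K I)
    {P : MvPolynomial (Fin n) K} (hP : P ∈ I) : antisym K b P ∈ I := by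
  rw [antisym, LinearMap.sum_apply]
  refine Ideal.sum_mem _ fun σ _ => ?_
  rw [LinearMap.smul_apply]
  exact zsmul_mem (hI P hP 1 (fun _ => Or.inl rfl) σ) _

lemma antisym_monomial {n : ℕ} (K : Type*) [CommRing K] (b : Fin n → ℕ) (a : Fin n →₀ ℕ) (c : K) :
    antisym K b (MvPolynomial.monomial a c) = MvPolynomial.C c * (blockMat K b a).det := by
  rw [antisym, LinearMap.sum_apply, Matrix.det_apply, Finset.mul_sum, Finset.sum_filter]
  refine Finset.sum_congr rfl fun σ _ => ?_
  simp only [blockMat, Matrix.of_apply, Finset.prod_ite_zero, Finset.mem_univ, true_imp_iff]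
  split_ifs
  · rw [LinearMap.smul_apply, AlgHom.toLinearMap_apply, bnAct_monomial, mul_smul_comm]
    simp [Units.smul_def]
  · simp

lemma coeff_bnAct_one {n : ℕ} {K : Type*} [CommRing K] (τ : Fin n → K)
    (P : MvPolynomial (Fin n) K) (a : Fin n →₀ ℕ) :
    MvPolynomial.coeff a (bnAct n K τ 1 P) = (∏ k, τ k ^ a k) * MvPolynomial.coeff a P := by
  induction P using MvPolynomial.induction_on' with
  | monomial u c =>
    rw [bnAct_monomial]
    have : (MvPolynomial.C c * ∏ k, (MvPolynomial.C (τ ((1 : Equiv.Perm (Fin n)) k)) *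
        MvPolynomial.X ((1 : Equiv.Perm (Fin n)) k)) ^ u k : MvPolynomial (Fin n) K) =
        MvPolynomial.monomial u ((∏ k, τ k ^ u k) * c) := by
      rw [MvPolynomial.monomial_eq, Finsupp.prod_fintype _ _ (by simp)]
      simp only [Equiv.Perm.one_apply, mul_pow, Finset.prod_mul_distrib, map_mul, map_prod, map_pow]
      ring
    rw [this, MvPolynomial.coeff_monomial, MvPolynomial.coeff_monomial]
    split_ifs with h
    · rw [h]
    · simp
  | add p q hp hq => rw [map_add, MvPolynomial.coeff_add, hp, hq, MvPolynomial.coeff_add, mul_add]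

/-- An ideal stable under sign changes contains, with each element, its part with prescribed
exponent parities at the variables in `S`: average over the sign change of one variable at a
time. -/
lemma exists_parity_proj {n : ℕ} {K : Type*} [Field K] [CharZero K]
    {I : Ideal (MvPolynomial (Fin n) K)} (hI : BnInvariantIdeal n K I)
    {P : MvPolynomial (Fin n) K} (hP : P ∈ I) (p : Fin n → ℕ) (S : Finset (Fin n)) :
    ∃ Q ∈ I, ∀ a, MvPolynomial.coeff a Q =
      if ∀ k ∈ S, a k % 2 = p k % 2 then MvPolynomial.coeff a P else 0 := by
  induction S using Finset.induction_on with
  | empty => exact ⟨P, hP, by simp⟩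
  | insert k S hk ih =>
    obtain ⟨Q, hQ, hc⟩ := ih
    let τ : Fin n → K := Function.update 1 k (-1)
    have hτ : IsSigns τ := by
      intro i
      by_cases h : i = k
      · subst h; simp [τ]
      · simp [τ, h]
    refine ⟨MvPolynomial.C (1 / 2) * (Q + MvPolynomial.C ((-1) ^ p k) * bnAct n K τ 1 Q), ?_, ?_⟩
    · exact I.mul_mem_left _ (I.add_mem hQ (I.mul_mem_left _ (hI Q hQ τ hτ 1)))
    · intro a
      have h1 : ∏ i, τ i ^ a i = (-1) ^ a k := by
        rw [Finset.prod_eq_single k]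
        · simp [τ]
        · intro i _ hi
          simp [τ, hi]
        · simp
      rw [MvPolynomial.coeff_C_mul, MvPolynomial.coeff_add, MvPolynomial.coeff_C_mul,
        coeff_bnAct_one, hc, h1]
      simp only [Finset.forall_mem_insert]
      by_cases hS : ∀ i ∈ S, a i % 2 = p i % 2
      · rw [if_pos hS]
        rcases Nat.even_or_odd (a k) with ha | ha <;> rcases Nat.even_or_odd (p k) with hp | hp <;>
          simp only [ha.neg_one_pow, hp.neg_one_pow]
        · have := Nat.even_iff.mp ha; have := Nat.even_iff.mp hp
          rw [if_pos ⟨by omega, hS⟩]; ring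
        · have := Nat.even_iff.mp ha; have := Nat.odd_iff.mp hp
          rw [if_neg (by omega)]; ring
        · have := Nat.odd_iff.mp ha; have := Nat.even_iff.mp hp
          rw [if_neg (by omega)]; ring
        · have := Nat.odd_iff.mp ha; have := Nat.odd_iff.mp hp
          rw [if_pos ⟨by omega, hS⟩]; ring
      · rw [if_neg hS, if_neg (fun h => hS h.2)]; simp

/-! ### Minimality of the staircase exponents -/

/-- Row values that are distinct in each block: the entries of the block lying below `i` have
distinct values below `q i`. -/
lemma card_lt_le {n : ℕ} (b q : Fin n → ℕ)
    (hq : ∀ i j, b i = b j → q i = q j → i = j) (i : Fin n) :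
    (Finset.univ.filter fun j => b j = b i ∧ q j < q i).card ≤ q i := by
  have := Finset.card_le_card_of_injOn (s := Finset.univ.filter fun j => b j = b i ∧ q j < q i)
    (t := Finset.range (q i)) q (by intro j hj; simpa using (Finset.mem_filter.mp hj).2.2)
    (by
      intro j hj k hk h
      exact hq j k ((Finset.mem_filter.mp hj).2.1.trans (Finset.mem_filter.mp hk).2.1.symm) h)
  simpa using this

lemma le_card_lt {n : ℕ} (b r : Fin n → ℕ)
    (hdown : ∀ i t, t < r i → ∃ j, b j = b i ∧ r j = t) (i : Fin n) :
    r i ≤ (Finset.univ.filter fun j => b j = b i ∧ r j < r i).card := by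
  have : Finset.range (r i) ⊆ (Finset.univ.filter fun j => b j = b i ∧ r j < r i).image r := by
    intro t ht
    obtain ⟨j, hj, hj'⟩ := hdown i t (Finset.mem_range.mp ht)
    refine Finset.mem_image.mpr ⟨j, ?_, hj'⟩
    simp only [Finset.mem_filter, Finset.mem_univ, true_and]
    exact ⟨hj, hj' ▸ Finset.mem_range.mp ht⟩
  have h := (Finset.card_le_card this).trans Finset.card_image_le
  simpa using h

/-- Ordering each block by `q` counts every pair of distinct elements of a block once, so the
count does not depend on `q`. -/
lemma two_mul_sum_card_lt {n : ℕ} (b q : Fin n → ℕ)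
    (hq : ∀ i j, b i = b j → q i = q j → i = j) :
    2 * ∑ i, (Finset.univ.filter fun j => b j = b i ∧ q j < q i).card =
      ∑ i, (Finset.univ.filter fun j => b j = b i ∧ j ≠ i).card := by
  have h1 : ∑ i, (Finset.univ.filter fun j => b j = b i ∧ q j < q i).card =
      ∑ i, (Finset.univ.filter fun j => b j = b i ∧ q i < q j).card := by
    simp_rw [Finset.card_filter]
    rw [Finset.sum_comm]
    refine Finset.sum_congr rfl fun i _ => Finset.sum_congr rfl fun j _ => ?_
    exact if_congr (and_congr_left' eq_comm) rfl rfl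
  rw [two_mul]
  conv_lhs => rw [h1]
  conv_lhs => arg 2; rw [← h1]
  rw [← Finset.sum_add_distrib]
  refine Finset.sum_congr rfl fun i _ => ?_
  rw [← Finset.card_union_of_disjoint]
  · congr 1
    ext j
    simp only [Finset.mem_union, Finset.mem_filter, Finset.mem_univ, true_and]
    constructor
    · rintro (⟨h, h'⟩ | ⟨h, h'⟩) <;> exact ⟨h, by rintro rfl; omega⟩
    · rintro ⟨h, h'⟩
      have : q j ≠ q i := fun h'' => h' (hq j i h h'')
      rcases lt_or_gt_of_ne this with h2 | h2
      · exact Or.inr ⟨h, h2⟩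
      · exact Or.inl ⟨h, h2⟩
  · rw [Finset.disjoint_left]
    intro j h h'
    simp only [Finset.mem_filter, Finset.mem_univ, true_and] at h h'
    omega

/-- Among functions injective on every block, the rows `r` (which take the values `0, …, h - 1` on
a block of size `h`) have minimal sum. -/
lemma sum_rows_le {n : ℕ} (b r q : Fin n → ℕ)
    (hinj : ∀ i j, b i = b j → r i = r j → i = j)
    (hdown : ∀ i t, t < r i → ∃ j, b j = b i ∧ r j = t)
    (hq : ∀ i j, b i = b j → q i = q j → i = j) : ∑ i, r i ≤ ∑ i, q i := by
  have h1 := Finset.sum_le_sum fun i (_ : i ∈ Finset.univ) => le_card_lt b r hdown i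
  have h2 := Finset.sum_le_sum fun i (_ : i ∈ Finset.univ) => card_lt_le b q hq i
  have h3 := two_mul_sum_card_lt b r hinj
  have h4 := two_mul_sum_card_lt b q hq
  omega

/-! ### The block polynomial lies in the ideal -/

/-- An exponent vector with the right parities, distinct entries in each block, the staircase
values away from the last rows in `V`, and degree at most that of the staircase is the staircase:
the entry at a last row must avoid the values above it, hence is at least its staircase value. -/
lemma eq_staircase {n : ℕ} (b r : Fin n → ℕ)
    (hdown : ∀ i t, t < r i → ∃ j, b j = b i ∧ r j = t)
    (V : Finset (Fin n)) (hV : ∀ k ∈ V, ∀ j, b j = b k → r j ≤ r k)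
    (a : Fin n → ℕ) (hpar : ∀ k, a k % 2 = b k % 2)
    (ha : ∀ i j, b i = b j → a i = a j → i = j)
    (hoff : ∀ k ∉ V, a k = 2 * r k + b k % 2)
    (hsum : ∑ k, a k ≤ ∑ k, (2 * r k + b k % 2)) (k : Fin n) : a k = 2 * r k + b k % 2 := by
  have hge : ∀ k ∈ Finset.univ, 2 * r k + b k % 2 ≤ a k := by
    intro k _
    by_cases hk : k ∈ V
    · by_contra! hlt
      have hp := hpar k
      obtain ⟨j, hj, hj'⟩ := hdown k (a k / 2) (by omega)
      have hjV : j ∉ V := by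
        intro hjV
        have := hV j hjV k hj.symm
        omega
      have hjk : j = k := ha j k hj (by rw [hoff j hjV, hj', hj]; omega)
      subst hjk
      omega
    · exact (hoff k hk).ge
  exact ((Finset.sum_eq_sum_iff_of_le hge).mp (le_antisymm (Finset.sum_le_sum hge) hsum) k
    (Finset.mem_univ k)).symm

/-- If the top-degree part of `P` involves only variables of `V`, each placed at the last row of its
block with staircase exponent in the monomial `e` of `P`, then antisymmetrising a monomial multiple
of `P` leaves a nonzero multiple of `blockPoly`. -/
theorem blockPoly_mem {n : ℕ} {K : Type*} [Field K] [CharZero K]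
    {I : Ideal (MvPolynomial (Fin n) K)} (hI : BnInvariantIdeal n K I)
    {P : MvPolynomial (Fin n) K} (hP : P ∈ I) (e : Fin n →₀ ℕ)
    (he : MvPolynomial.coeff e P ≠ 0) (hmax : ∀ u ∈ P.support, ∑ k, u k ≤ ∑ k, e k)
    (V : Finset (Fin n))
    (htop : ∀ u ∈ P.support, ∑ k, u k = ∑ k, e k → ∀ k ∉ V, u k = 0)
    (b r : Fin n → ℕ)
    (hinj : ∀ i j, b i = b j → r i = r j → i = j)
    (hdown : ∀ i t, t < r i → ∃ j, b j = b i ∧ r j = t)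
    (hV : ∀ k ∈ V, ∀ j, b j = b k → r j ≤ r k)
    (heV : ∀ k ∈ V, e k = 2 * r k + b k % 2) :
    blockPoly K b r ∈ I := by
  have heoff : ∀ k ∉ V, e k = 0 := htop e (MvPolynomial.mem_support_iff.mpr he) rfl
  -- `a0` is the staircase and `y` the cofactor with `X ^ y * X ^ e = X ^ a0`;
  -- `y` involves no variable of `V`.
  let a0 : Fin n →₀ ℕ := Finsupp.equivFunOnFinite.symm fun k => 2 * r k + b k % 2
  let y : Fin n →₀ ℕ := Finsupp.equivFunOnFinite.symm
    fun k => if k ∈ V then 0 else 2 * r k + b k % 2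
  have ha0 : ∀ k, a0 k = 2 * r k + b k % 2 := fun k => rfl
  have hy : ∀ k, y k = if k ∈ V then 0 else 2 * r k + b k % 2 := fun k => rfl
  have hey : ∀ k, y k + e k = a0 k := by
    intro k
    rw [ha0, hy]
    by_cases hk : k ∈ V
    · simp [hk, heV k hk]
    · simp [hk, heoff k hk]
  obtain ⟨Q, hQ, hQc⟩ := exists_parity_proj hI
    (I.mul_mem_left (MvPolynomial.monomial y 1) hP) b Finset.univ
  have hca0 : MvPolynomial.coeff a0 Q = MvPolynomial.coeff e P := by
    have : a0 = y + e := by ext k; exact (hey k).symm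
    rw [hQc, if_pos, this, MvPolynomial.coeff_monomial_mul, one_mul]
    intro k _
    rw [ha0]; omega
  -- Every monomial of `Q` other than `a0` has a repeated exponent in some block.
  have hA : antisym K b Q = MvPolynomial.C (MvPolynomial.coeff e P) * blockPoly K b r := by
    rw [← MvPolynomial.support_sum_monomial_coeff Q, map_sum, Finset.sum_eq_single a0]
    · rw [antisym_monomial, hca0, ← det_blockMat K b r hinj hdown]
      rfl
    · intro a haQ hne
      rw [antisym_monomial]
      by_cases hd : ∀ i j, b i = b j → a i = a j → i = j
      · exfalso
        apply hne
        have h1 := MvPolynomial.mem_support_iff.mp haQ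
        rw [hQc] at h1
        have h2 := (ite_ne_right_iff.mp h1).1
        have h3 := (ite_ne_right_iff.mp h1).2
        rw [MvPolynomial.coeff_monomial_mul', one_mul] at h3
        have hya := (ite_ne_right_iff.mp h3).1
        have h4 := MvPolynomial.mem_support_iff.mpr (ite_ne_right_iff.mp h3).2
        have hpar : ∀ k, a k % 2 = b k % 2 := fun k => h2 k (Finset.mem_univ k)
        have hsub : ∀ k, a k = y k + (a - y) k := fun k => by
          have := hya k
          rw [Finsupp.tsub_apply]; omega
        have hs1 : ∑ k, a k = ∑ k, y k + ∑ k, (a - y) k := by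
          rw [← Finset.sum_add_distrib]
          exact Finset.sum_congr rfl fun k _ => hsub k
        have hs2 : ∑ k, a0 k = ∑ k, y k + ∑ k, e k := by
          rw [← Finset.sum_add_distrib]
          exact Finset.sum_congr rfl fun k _ => (hey k).symm
        have hs3 := hmax _ h4
        have hs4 : ∑ k, r k ≤ ∑ k, a k / 2 := by
          refine sum_rows_le b r _ hinj hdown fun i j hb hij => hd i j hb ?_
          have := hpar i
          have := hpar j
          rw [hb] at *
          omega
        have hs5 : ∑ k, a k = 2 * ∑ k, a k / 2 + ∑ k, b k % 2 := by
          rw [Finset.mul_sum, ← Finset.sum_add_distrib]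
          refine Finset.sum_congr rfl fun k _ => ?_
          have := hpar k
          omega
        have hs6 : ∑ k, a0 k = 2 * ∑ k, r k + ∑ k, b k % 2 := by
          rw [Finset.mul_sum, ← Finset.sum_add_distrib]
          rfl
        have hz := htop _ h4 (by omega)
        ext k
        refine eq_staircase b r hdown V hV a hpar hd ?_ ?_ k
        · intro k hk
          rw [hsub k, hz k hk, hy, if_neg hk, add_zero]
        · change ∑ k, a k ≤ ∑ k, a0 k
          omega
      · push Not at hd
        obtain ⟨i, j, hb, haij, hij⟩ := hd
        rw [det_blockMat_eq_zero K b a hij hb haij, mul_zero]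
    · intro h
      rw [MvPolynomial.notMem_support_iff.mp h]
      simp
  have hm := antisym_mem b hI hQ
  rw [hA] at hm
  have := I.mul_mem_left (MvPolynomial.C (MvPolynomial.coeff e P)⁻¹) hm
  rwa [← mul_assoc, ← map_mul, inv_mul_cancel₀ he, map_one, one_mul] at this

/-- Permuting the labelling of the variables by `σ` changes `blockPoly` by the action of
`σ⁻¹`, which does not affect membership in an invariant ideal. -/
lemma blockPoly_mem_of_comp {n : ℕ} {K : Type*} [CommRing K]
    {I : Ideal (MvPolynomial (Fin n) K)} (hI : BnInvariantIdeal n K I)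
    (b r : Fin n → ℕ) (σ : Equiv.Perm (Fin n))
    (h : blockPoly K (fun k => b (σ k)) (fun k => r (σ k)) ∈ I) : blockPoly K b r ∈ I := by
  have h1 := hI _ h 1 (fun _ => Or.inl rfl) σ
  convert h1 using 1
  have hX : ∀ i, bnAct n K 1 σ (MvPolynomial.X i) = MvPolynomial.X (σ i) := by
    intro i
    simp [bnAct]
  simp only [blockPoly, map_mul, map_prod, apply_ite (bnAct n K 1 σ), map_sub, map_pow, map_one, hX]
  rw [← Equiv.prod_comp σ]
  congr 1
  · refine Finset.prod_congr rfl fun i _ => ?_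
    rw [← Equiv.prod_comp σ]
  · rw [← Equiv.prod_comp σ]

/-! ### Coordinates of a bitableau -/

/-- `b` and `r` are the column label (even for the left diagram, odd for the right one) and
the row of the entries of `bt`. -/
structure IsCoords {n : ℕ} {f g : ℕ → ℕ} (bt : Bitableau n f g) (b r : Fin n → ℕ) : Prop where
  left : ∀ c ∈ cellsF n f, b (bt.left c) = 2 * c.2 ∧ r (bt.left c) = c.1
  right : ∀ c ∈ cellsF n g, b (bt.right c) = 2 * c.2 + 1 ∧ r (bt.right c) = c.1
  cover : ∀ k, (∃ c ∈ cellsF n f, bt.left c = k) ∨ (∃ c ∈ cellsF n g, bt.right c = k)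

lemma exists_isCoords {n : ℕ} {f g : ℕ → ℕ} (bt : Bitableau n f g) :
    ∃ b r, IsCoords bt b r := by
  choose cell hcell huniq using bt.bij
  refine ⟨fun k => Sum.elim (fun c => 2 * c.2) (fun c => 2 * c.2 + 1) (cell k),
    fun k => Sum.elim (fun c => c.1) (fun c => c.1) (cell k), ?_, ?_, ?_⟩
  · intro c hc
    have := huniq (bt.left c) (Sum.inl c) ⟨hc, rfl⟩
    simp [← this]
  · intro c hc
    have := huniq (bt.right c) (Sum.inr c) ⟨hc, rfl⟩
    simp [← this]
  · intro k
    have := hcell k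
    rcases h : cell k with c | c
    · rw [h] at this
      exact Or.inl ⟨c, this⟩
    · rw [h] at this
      exact Or.inr ⟨c, this⟩

namespace IsCoords

variable {n : ℕ} {f g : ℕ → ℕ} {bt : Bitableau n f g} {b r : Fin n → ℕ}

lemma left_inj (h : IsCoords bt b r) : Set.InjOn bt.left (cellsF n f) := by
  intro c hc c' hc' heq
  have h1 := h.left c hc
  have h2 := h.left c' hc'
  rw [heq] at h1
  exact Prod.ext (by omega) (by omega)

lemma right_inj (h : IsCoords bt b r) : Set.InjOn bt.right (cellsF n g) := by
  intro c hc c' hc' heq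
  have h1 := h.right c hc
  have h2 := h.right c' hc'
  rw [heq] at h1
  exact Prod.ext (by omega) (by omega)

lemma inj (h : IsCoords bt b r) (i j : Fin n) (hb : b i = b j) (hr : r i = r j) : i = j := by
  rcases h.cover i with ⟨c, hc, rfl⟩ | ⟨c, hc, rfl⟩ <;>
    rcases h.cover j with ⟨d, hd, rfl⟩ | ⟨d, hd, rfl⟩
  · have := h.left c hc
    have := h.left d hd
    exact congrArg bt.left (Prod.ext (by omega) (by omega))
  · have := h.left c hc
    have := h.right d hd
    omega
  · have := h.right c hc
    have := h.left d hd
    omega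
  · have := h.right c hc
    have := h.right d hd
    exact congrArg bt.right (Prod.ext (by omega) (by omega))

lemma prod_univ (h : IsCoords bt b r) {M : Type*} [CommMonoid M] (F : Fin n → M) :
    ∏ k, F k = (∏ c ∈ cellsF n f, F (bt.left c)) * ∏ c ∈ cellsF n g, F (bt.right c) := by
  classical
  have hu : (Finset.univ : Finset (Fin n)) =
      (cellsF n f).image bt.left ∪ (cellsF n g).image bt.right := by
    ext k
    simpa only [Finset.mem_univ, Finset.mem_union, Finset.mem_image, true_iff] using h.cover k
  rw [hu, Finset.prod_union, Finset.prod_image h.left_inj, Finset.prod_image h.right_inj]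
  rw [Finset.disjoint_left]
  intro k hk hk'
  obtain ⟨c, hc, rfl⟩ := Finset.mem_image.mp hk
  obtain ⟨d, hd, hcd⟩ := Finset.mem_image.mp hk'
  have h1 := h.left c hc
  have h2 := h.right d hd
  rw [hcd] at h2
  omega

lemma prod_colPairs {M : Type*} [CommMonoid M] (f : ℕ → ℕ) (F : ℕ × ℕ → ℕ × ℕ → M) :
    ∏ c ∈ cellsF n f, ∏ d ∈ cellsF n f, (if d.2 = c.2 ∧ c.1 < d.1 then F c d else 1) =
      ∏ q ∈ colPairs n f, F q.1 q.2 := by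
  rw [colPairs, Finset.prod_filter, Finset.prod_product]
  refine Finset.prod_congr rfl fun c _ => Finset.prod_congr rfl fun d _ => ?_
  exact if_congr (and_congr_left' eq_comm) rfl rfl

lemma blockPoly_eq (h : IsCoords bt b r) (K : Type*) [CommRing K] :
    blockPoly K b r =
      (-1) ^ (colPairs n f).card * (-1) ^ (colPairs n g).card * speB n K bt := by
  have hL : ∏ c ∈ cellsF n f, ∏ j, (if b j = b (bt.left c) ∧ r (bt.left c) < r j then
      (MvPolynomial.X j ^ 2 - MvPolynomial.X (bt.left c) ^ 2 : MvPolynomial (Fin n) K) else 1) =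
      ∏ q ∈ colPairs n f, -(MvPolynomial.X (bt.left q.1) ^ 2 - MvPolynomial.X (bt.left q.2) ^ 2) := by
    rw [← prod_colPairs f fun c d =>
      -(MvPolynomial.X (bt.left c) ^ 2 - MvPolynomial.X (bt.left d) ^ 2 : MvPolynomial (Fin n) K)]
    refine Finset.prod_congr rfl fun c hc => ?_
    rw [h.prod_univ]
    conv_rhs => rw [← mul_one (∏ d ∈ cellsF n f, _)]
    congr 1
    · refine Finset.prod_congr rfl fun d hd => ?_
      rw [(h.left c hc).1, (h.left c hc).2, (h.left d hd).1, (h.left d hd).2, neg_sub]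
      exact if_congr (by omega) rfl rfl
    · refine Finset.prod_eq_one fun d hd => if_neg ?_
      rw [(h.left c hc).1, (h.right d hd).1]
      omega
  have hR : ∏ c ∈ cellsF n g, ∏ j, (if b j = b (bt.right c) ∧ r (bt.right c) < r j then
      (MvPolynomial.X j ^ 2 - MvPolynomial.X (bt.right c) ^ 2 : MvPolynomial (Fin n) K) else 1) =
      ∏ q ∈ colPairs n g,
        -(MvPolynomial.X (bt.right q.1) ^ 2 - MvPolynomial.X (bt.right q.2) ^ 2) := by
    rw [← prod_colPairs g fun c d =>
      -(MvPolynomial.X (bt.right c) ^ 2 - MvPolynomial.X (bt.right d) ^ 2 : MvPolynomial (Fin n) K)]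
    refine Finset.prod_congr rfl fun c hc => ?_
    rw [h.prod_univ]
    conv_rhs => rw [← one_mul (∏ d ∈ cellsF n g, _)]
    congr 1
    · refine Finset.prod_eq_one fun d hd => if_neg ?_
      rw [(h.right c hc).1, (h.left d hd).1]
      omega
    · refine Finset.prod_congr rfl fun d hd => ?_
      rw [(h.right c hc).1, (h.right c hc).2, (h.right d hd).1, (h.right d hd).2, neg_sub]
      exact if_congr (by omega) rfl rfl
  have hX : ∏ i, (MvPolynomial.X i ^ (b i % 2) : MvPolynomial (Fin n) K) =
      ∏ c ∈ cellsF n g, MvPolynomial.X (bt.right c) := by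
    rw [h.prod_univ, Finset.prod_eq_one, one_mul]
    · refine Finset.prod_congr rfl fun c hc => ?_
      rw [(h.right c hc).1, Nat.mul_add_mod, pow_one]
    · intro c hc
      rw [(h.left c hc).1, Nat.mul_mod_right, pow_zero]
  rw [blockPoly, h.prod_univ, hL, hR, hX, Finset.prod_neg, Finset.prod_neg, speB]
  ring

end IsCoords

/-- The diagram of the conjugate of `f` is the transpose of the diagram of `f`: its columns have
heights `f 0, f 1, …`. -/
lemma mem_cellsF_conjF {n : ℕ} {f : ℕ → ℕ} (hf : Antitone f) (hfn : ∀ c, f c ≤ n)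
    (hf0 : ∀ c, 0 < f c → c < n) (x y : ℕ) :
    (x, y) ∈ cellsF n (conjF n f) ↔ x < f y := by
  simp only [cellsF, Finset.mem_filter, Finset.mem_product, Finset.mem_range]
  simp only [conjF]
  constructor
  · rintro ⟨⟨hx, hy⟩, h⟩
    by_contra! hle
    have : (Finset.range n).filter (fun i => x < f i) ⊆ Finset.range y := by
      intro i hi
      rw [Finset.mem_filter] at hi
      rw [Finset.mem_range]
      by_contra! hyi
      have := hf hyi
      omega
    have := Finset.card_le_card this
    rw [Finset.card_range] at this
    omega
  · intro h
    have hy := hf0 y (by omega)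
    refine ⟨⟨lt_of_lt_of_le h (hfn y), hy⟩, ?_⟩
    have : Finset.range (y + 1) ⊆ (Finset.range n).filter (fun i => x < f i) := by
      intro i hi
      rw [Finset.mem_range] at hi
      rw [Finset.mem_filter, Finset.mem_range]
      have := hf (show i ≤ y by omega)
      omega
    have := Finset.card_le_card this
    rw [Finset.card_range] at this
    omega

/-! ### Decreasing rearrangements -/

lemma sortedDesc_coe (M : Multiset ℕ) : (((M.sort (· ≤ ·)).reverse : List ℕ) : Multiset ℕ) = M := by
  rw [Multiset.coe_reverse, Multiset.sort_eq]

lemma sortedDesc_mem_or (M : Multiset ℕ) (j : ℕ) : sortedDesc M j ∈ M ∨ sortedDesc M j = 0 := by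
  by_cases h : j < (M.sort (· ≤ ·)).reverse.length
  · left
    have h1 : sortedDesc M j ∈ (((M.sort (· ≤ ·)).reverse : List ℕ) : Multiset ℕ) := by
      rw [sortedDesc, List.getD_eq_getElem _ _ h, Multiset.mem_coe]
      exact List.getElem_mem h
    rwa [sortedDesc_coe] at h1
  · exact Or.inr (List.getD_eq_default _ _ (not_lt.mp h))

lemma sortedDesc_of_card_le (M : Multiset ℕ) {j : ℕ} (h : M.card ≤ j) : sortedDesc M j = 0 :=
  List.getD_eq_default _ _ (by simpa using h)

lemma sortedDesc_antitone (M : Multiset ℕ) : Antitone (sortedDesc M) := by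
  intro i j hij
  by_cases h : j < (M.sort (· ≤ ·)).reverse.length
  · rw [sortedDesc, sortedDesc, List.getD_eq_getElem _ _ h, List.getD_eq_getElem _ _ (lt_of_le_of_lt hij h)]
    rcases hij.eq_or_lt with rfl | hlt
    · exact le_rfl
    · exact List.pairwise_iff_getElem.mp
        (List.pairwise_reverse.mpr (Multiset.pairwise_sort M (· ≤ ·))) i j _ h hlt
  · rw [sortedDesc, List.getD_eq_default _ _ (not_lt.mp h)]
    exact Nat.zero_le _

lemma card_getD_eq (l : List ℕ) (N v : ℕ) (hN : l.length ≤ N) (hv : v ≠ 0) :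
    ((Finset.range N).filter fun j => l.getD j 0 = v).card = l.count v := by
  induction l generalizing N with
  | nil => simp [hv.symm]
  | cons x l ih =>
    obtain ⟨N, rfl⟩ : ∃ N', N = N' + 1 := ⟨N - 1, by simp at hN; omega⟩
    have := ih N (by simpa using hN)
    rw [Finset.card_filter] at this ⊢
    rw [Finset.sum_range_succ', List.count_cons, ← this]
    simp

lemma card_sortedDesc_eq (M : Multiset ℕ) (N v : ℕ) (hN : M.card ≤ N) (hv : v ≠ 0) :
    ((Finset.range N).filter fun j => sortedDesc M j = v).card = M.count v := by
  conv_rhs => rw [← sortedDesc_coe M]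
  rw [Multiset.coe_count]
  exact card_getD_eq _ _ _ (by simpa using hN) hv

/-! ### Matching the variables with the bottom cells -/

/-- A value-preserving injection `S → T` exists as soon as every value is taken at least as often
on `T` as on `S`; it extends to a permutation. -/
lemma exists_perm_of_card_le {n : ℕ} (S T : Finset (Fin n)) (u w : Fin n → ℕ)
    (h : ∀ v, (S.filter fun i => u i = v).card ≤ (T.filter fun i => w i = v).card) :
    ∃ σ : Equiv.Perm (Fin n), ∀ i ∈ S, σ i ∈ T ∧ w (σ i) = u i := by
  classical
  have h1 : ∀ v, Nonempty ((S.filter fun i => u i = v) ↪ (T.filter fun i => w i = v)) := fun v =>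
    Function.Embedding.nonempty_of_card_le (by simpa only [Fintype.card_coe] using h v)
  let F := fun v => (h1 v).some
  let G : Fin n → Fin n := fun i =>
    if hi : i ∈ S then (F (u i) ⟨i, Finset.mem_filter.mpr ⟨hi, rfl⟩⟩).1 else i
  have hG : ∀ i ∈ S, G i ∈ T ∧ w (G i) = u i := by
    intro i hi
    simp only [G, dif_pos hi]
    exact Finset.mem_filter.mp (F (u i) ⟨i, Finset.mem_filter.mpr ⟨hi, rfl⟩⟩).2
  have hinj : Set.InjOn G S := by
    intro i hi j hj hij
    have huv : u i = u j := by rw [← (hG i hi).2, ← (hG j hj).2, hij]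
    have hval : ∀ k (hk : k ∈ S) v (hv : u k = v),
        G k = (F v ⟨k, Finset.mem_filter.mpr ⟨hk, hv⟩⟩).1 := by
      rintro k hk v rfl
      exact dif_pos hk
    rw [hval i hi _ rfl, hval j hj _ huv.symm] at hij
    exact congrArg (fun x => x.1) ((F (u i)).injective (Subtype.ext hij))
  obtain ⟨g, hg⟩ := Finset.exists_equiv_extend_of_card_eq (t := (Finset.univ : Finset (Fin n)))
    (by simp) (s := S) (f := G) (Finset.subset_univ _) hinj
  refine ⟨g.trans (Equiv.subtypeUnivEquiv (fun x => Finset.mem_univ x)), fun i hi => ?_⟩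
  have : (g.trans (Equiv.subtypeUnivEquiv (fun x => Finset.mem_univ x))) i = G i := hg i hi
  rw [this]
  exact hG i hi

end SpechtBn

open SpechtBn in
/-- Theorem 7: the Specht ideal `I_{Γ*(m)}` is contained in any `B_n`-invariant ideal
containing a polynomial whose top homogeneous component contains the monomial `m`
(with `wt(P_d) + d₁ + d₂ ≤ n`). -/
theorem spechtIdeal_le_of_monomial {K : Type*} [Field K] [CharZero K] {n : ℕ}
    (I : Ideal (MvPolynomial (Fin n) K)) (hI : BnInvariantIdeal n K I)
    (P : MvPolynomial (Fin n) K) (hP : P ∈ I) (e : Fin n →₀ ℕ)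
    (he : MvPolynomial.coeff e
      (MvPolynomial.homogeneousComponent P.totalDegree P) ≠ 0)
    (hwt : (MvPolynomial.homogeneousComponent P.totalDegree P).vars.card
        + d1F e + d2F e ≤ n) :
    spechtIdeal n K (gammaStarFst e) (gammaStarSnd e) ≤ I := by
  set V := (MvPolynomial.homogeneousComponent P.totalDegree P).vars with hVdef
  have he' := he
  rw [MvPolynomial.coeff_homogeneousComponent] at he'
  have hdeg : ∑ k, e k = P.totalDegree := by
    rw [← Finsupp.degree_eq_sum]; exact (ite_ne_right_iff.mp he').1
  have hcoeff : MvPolynomial.coeff e P ≠ 0 := (ite_ne_right_iff.mp he').2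
  have htop : ∀ u ∈ P.support, ∑ k, u k = ∑ k, e k → ∀ k ∉ V, u k = 0 := by
    intro u hu hsum k hk
    by_contra hne
    refine hk ((MvPolynomial.mem_vars_iff_mem_support k).mpr ⟨u, ?_, Finsupp.mem_support_iff.mpr hne⟩)
    rw [MvPolynomial.mem_support_iff, MvPolynomial.coeff_homogeneousComponent, if_pos]
    · exact MvPolynomial.mem_support_iff.mp hu
    · rw [Finsupp.degree_eq_sum, hsum, hdeg]
  have hmax : ∀ u ∈ P.support, ∑ k, u k ≤ ∑ k, e k := by
    intro u hu
    have := MvPolynomial.le_totalDegree hu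
    rw [Finsupp.sum_fintype _ _ (by simp)] at this
    rw [hdeg]
    exact this
  have heV : ∀ k, e k ≠ 0 → k ∈ V := fun k hk => by
    by_contra h
    exact hk (htop e (MvPolynomial.mem_support_iff.mpr hcoeff) rfl k h)
  have hVsplit : (V.filter fun i => e i = 0).card + (evenSupp e).card + (oddSupp e).card
      = V.card := by
    have h1 : V = (V.filter fun i => e i = 0) ∪ (evenSupp e) ∪ (oddSupp e) := by
      ext k
      have := heV k
      simp only [evenSupp, oddSupp, Finset.mem_union, Finset.mem_filter, Finset.mem_univ, true_and,
        ← Nat.not_even_iff_odd]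
      by_cases h0 : e k = 0
      · simp [h0]
      · simp only [h0, this h0]; tauto
    conv_rhs => rw [h1]
    rw [Finset.card_union_of_disjoint, Finset.card_union_of_disjoint]
    · rw [Finset.disjoint_left]
      intro k h h'
      exact (Finset.mem_filter.mp h').2.1 (Finset.mem_filter.mp h).2
    · rw [Finset.disjoint_left]
      intro k h h'
      have h2 := (Finset.mem_filter.mp h').2
      rcases Finset.mem_union.mp h with h | h
      · rw [(Finset.mem_filter.mp h).2] at h2
        simp at h2
      · exact (Nat.not_even_iff_odd.mpr h2) (Finset.mem_filter.mp h).2.2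
  -- `A`: the heights of the columns of height at least two in the first diagram;
  -- `B`: the heights of all columns in the second one.
  set A := (evenSupp e).val.map fun i => e i / 2 + 1 with hA
  set B := (oddSupp e).val.map fun i => e i / 2 + 1 with hB
  have hcA : A.card = (evenSupp e).card := by simp [hA]
  have hcB : B.card = (oddSupp e).card := by simp [hB]
  have hAn : ∀ c, sortedDesc A c ≤ n := by
    intro c
    rcases sortedDesc_mem_or A c with h | h
    · obtain ⟨i, hi, h⟩ := Multiset.mem_map.mp h
      have h1 : e i / 2 ≤ d1F e := Finset.single_le_sum (f := fun i => e i / 2) (by simp) hi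
      have h2 : 0 < (evenSupp e).card := Finset.card_pos.mpr ⟨i, hi⟩
      omega
    · omega
  have hBn : ∀ c, sortedDesc B c ≤ n := by
    intro c
    rcases sortedDesc_mem_or B c with h | h
    · obtain ⟨i, hi, h⟩ := Multiset.mem_map.mp h
      have h1 : e i / 2 ≤ d2F e := Finset.single_le_sum (f := fun i => e i / 2) (by simp) hi
      have h2 : 0 < (oddSupp e).card := Finset.card_pos.mpr ⟨i, hi⟩
      omega
    · omega
  set N := n - ((oddSupp e).card + d1F e + d2F e) with hN
  have hgF : ∀ c, gammaFst e c = if c < N then max (sortedDesc A c) 1 else 0 := fun c => rfl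
  have hgS : gammaSnd e = sortedDesc B := rfl
  have hFanti : Antitone (gammaFst e) := by
    intro i j hij
    have := sortedDesc_antitone A hij
    rw [hgF, hgF]
    split_ifs <;> omega
  have hF0 : ∀ c, 0 < gammaFst e c → c < n := by
    intro c hc
    rw [hgF] at hc
    split_ifs at hc <;> omega
  have hFn : ∀ c, gammaFst e c ≤ n := by
    intro c
    have := hAn c
    rw [hgF]
    split_ifs <;> omega
  have hS0 : ∀ c, 0 < gammaSnd e c → c < n := by
    intro c hc
    by_contra! h
    rw [hgS, sortedDesc_of_card_le B (by omega)] at hc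
    omega
  have hSanti : Antitone (gammaSnd e) := sortedDesc_antitone B
  have hcellL : ∀ x y, (x, y) ∈ cellsF n (gammaStarFst e) ↔ x < gammaFst e y :=
    mem_cellsF_conjF hFanti hFn hF0
  have hcellR : ∀ x y, (x, y) ∈ cellsF n (gammaStarSnd e) ↔ x < gammaSnd e y :=
    mem_cellsF_conjF hSanti hBn hS0
  rw [spechtIdeal, Ideal.span_le]
  rintro _ ⟨bt, rfl⟩
  obtain ⟨b, r, hbr⟩ := exists_isCoords bt
  have hdown : ∀ i t, t < r i → ∃ j, b j = b i ∧ r j = t := by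
    intro i t ht
    rcases hbr.cover i with ⟨⟨x, y⟩, hc, rfl⟩ | ⟨⟨x, y⟩, hc, rfl⟩
    · have h1 := hbr.left _ hc
      rw [h1.2] at ht
      have hc' := (hcellL t y).mpr (ht.trans ((hcellL x y).mp hc))
      have h2 := hbr.left _ hc'
      exact ⟨_, h2.1.trans h1.1.symm, h2.2⟩
    · have h1 := hbr.right _ hc
      rw [h1.2] at ht
      have hc' := (hcellR t y).mpr (ht.trans ((hcellR x y).mp hc))
      have h2 := hbr.right _ hc'
      exact ⟨_, h2.1.trans h1.1.symm, h2.2⟩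
  -- The entries at the bottoms of the columns.
  let T : Finset (Fin n) := Finset.univ.filter fun k => ∀ j, b j = b k → r j ≤ r k
  have hTL : ∀ t, ((Finset.range n).filter fun c => gammaFst e c = t + 1).card ≤
      (T.filter fun k => 2 * r k + b k % 2 = 2 * t).card := by
    intro t
    have hmem : ∀ c, gammaFst e c = t + 1 → (t, c) ∈ cellsF n (gammaStarFst e) := fun c hc =>
      (hcellL t c).mpr (by omega)
    refine Finset.card_le_card_of_injOn (fun c => bt.left (t, c)) ?_ ?_
    · intro c hc
      have hc2 := (Finset.mem_filter.mp hc).2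
      have h1 := hbr.left _ (hmem c hc2)
      refine Finset.mem_coe.mpr (Finset.mem_filter.mpr ⟨Finset.mem_filter.mpr
        ⟨Finset.mem_univ _, ?_⟩, ?_⟩)
      · intro j hj
        rw [h1.1] at hj
        rw [h1.2]
        rcases hbr.cover j with ⟨⟨x, y⟩, hd, rfl⟩ | ⟨⟨x, y⟩, hd, rfl⟩
        · have h2 := hbr.left _ hd
          have h3 := (hcellL x y).mp hd
          simp only at h2 hj
          obtain rfl : y = c := by omega
          omega
        · have h2 := hbr.right _ hd
          omega
      · rw [h1.1, h1.2]
        simp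
    · intro c hc c' hc' h
      have := hbr.left_inj (hmem c (Finset.mem_filter.mp hc).2)
        (hmem c' (Finset.mem_filter.mp hc').2) h
      exact congrArg Prod.snd this
  have hTR : ∀ t, ((Finset.range n).filter fun c => gammaSnd e c = t + 1).card ≤
      (T.filter fun k => 2 * r k + b k % 2 = 2 * t + 1).card := by
    intro t
    have hmem : ∀ c, gammaSnd e c = t + 1 → (t, c) ∈ cellsF n (gammaStarSnd e) := fun c hc =>
      (hcellR t c).mpr (by omega)
    refine Finset.card_le_card_of_injOn (fun c => bt.right (t, c)) ?_ ?_
    · intro c hc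
      have hc2 := (Finset.mem_filter.mp hc).2
      have h1 := hbr.right _ (hmem c hc2)
      refine Finset.mem_coe.mpr (Finset.mem_filter.mpr ⟨Finset.mem_filter.mpr
        ⟨Finset.mem_univ _, ?_⟩, ?_⟩)
      · intro j hj
        rw [h1.1] at hj
        rw [h1.2]
        rcases hbr.cover j with ⟨⟨x, y⟩, hd, rfl⟩ | ⟨⟨x, y⟩, hd, rfl⟩
        · have h2 := hbr.left _ hd
          omega
        · have h2 := hbr.right _ hd
          have h3 := (hcellR x y).mp hd
          simp only at h2 hj
          obtain rfl : y = c := by omega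
          omega
      · rw [h1.1, h1.2]
        simp only
        omega
    · intro c hc c' hc' h
      have := hbr.right_inj (hmem c (Finset.mem_filter.mp hc).2)
        (hmem c' (Finset.mem_filter.mp hc').2) h
      exact congrArg Prod.snd this
  have hcount : ∀ v, (V.filter fun i => e i = v).card ≤
      (T.filter fun k => 2 * r k + b k % 2 = v).card := by
    intro v
    rcases Nat.even_or_odd' v with ⟨t, rfl | rfl⟩
    · refine le_trans ?_ (hTL t)
      rcases Nat.eq_zero_or_pos t with rfl | ht
      -- The variables of the top component that are absent from `e` go to columns of height one;
      -- this is where the bound on the weight is needed.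
      · have hsub : Finset.Ico (evenSupp e).card N ⊆
            (Finset.range n).filter fun c => gammaFst e c = 0 + 1 := by
          intro c hc
          rw [Finset.mem_Ico] at hc
          rw [Finset.mem_filter, Finset.mem_range, hgF, if_pos hc.2,
            sortedDesc_of_card_le A (by omega)]
          exact ⟨by omega, rfl⟩
        have := Finset.card_le_card hsub
        rw [Nat.card_Ico] at this
        rw [mul_zero]
        omega
      · have h1 := card_sortedDesc_eq A n (t + 1) (by omega) (by omega)
        have h2 : ((Finset.range n).filter fun j => sortedDesc A j = t + 1) ⊆
            (Finset.range n).filter fun c => gammaFst e c = t + 1 := by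
          intro c hc
          rw [Finset.mem_filter] at hc ⊢
          have hcl : c < A.card := by
            by_contra! h
            have := sortedDesc_of_card_le A h
            omega
          rw [hgF, if_pos (by omega), hc.2]
          exact ⟨hc.1, by omega⟩
        refine le_trans ?_ (Finset.card_le_card h2)
        rw [h1, hA, Multiset.count_map, ← Finset.filter_val, Finset.card_val]
        refine Finset.card_le_card fun i hi => ?_
        have hi2 := (Finset.mem_filter.mp hi).2
        refine Finset.mem_filter.mpr ⟨Finset.mem_filter.mpr ⟨Finset.mem_univ _, by omega, ?_⟩,
          by omega⟩
        exact Nat.even_iff.mpr (by omega)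
    · refine le_trans ?_ (hTR t)
      rw [hgS, card_sortedDesc_eq B n (t + 1) (by omega) (by omega), hB, Multiset.count_map,
        ← Finset.filter_val, Finset.card_val]
      refine Finset.card_le_card fun i hi => ?_
      have hi2 := (Finset.mem_filter.mp hi).2
      refine Finset.mem_filter.mpr ⟨Finset.mem_filter.mpr ⟨Finset.mem_univ _, ?_⟩, by omega⟩
      exact Nat.odd_iff.mpr (by omega)
  obtain ⟨σ, hσ⟩ := exists_perm_of_card_le V T e (fun k => 2 * r k + b k % 2) hcount
  have hmem : blockPoly K b r ∈ I := by
    refine blockPoly_mem_of_comp hI b r σ (blockPoly_mem hI hP e hcoeff hmax V htop _ _ ?_ ?_ ?_ ?_)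
    · intro i j hb hr
      exact σ.injective (hbr.inj _ _ hb hr)
    · intro i t ht
      obtain ⟨j, hj⟩ := hdown (σ i) t ht
      exact ⟨σ.symm j, by simpa using hj⟩
    · intro k hk j hj
      exact (Finset.mem_filter.mp (hσ k hk).1).2 (σ j) hj
    · intro k hk
      exact (hσ k hk).2.symm
  rw [hbr.blockPoly_eq, mul_assoc] at hmem
  have hunit : ∀ (m : ℕ) (Q : MvPolynomial (Fin n) K), (-1) ^ m * Q ∈ I → Q ∈ I := by
    intro m Q h
    rcases neg_one_pow_eq_or (MvPolynomial (Fin n) K) m with h1 | h1 <;> rw [h1] at h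
    · simpa using h
    · simpa using h
  exact hunit _ _ (hunit _ _ hmem)
end

section
/- Let I ⊆ K[x₁,…,x_n] be a B_n-invariant ideal and P ∈ I of degree d. Let m be a monomial occurring in P_d, the homogeneous component of P of degree d, and assume wt(P_d) + d₁ + d₂ ≤ n (notation below). Then the zero set V(I) ⊆ K^n of I is contained in the B_n-Specht variety V_{Γ*(m)}, and V(I) ∩ H_{(ϑ,ω)} = ∅ for every bipartition (ϑ,ω) of n with (ϑ,ω) ⊴ Γ*(m) in the bidominance order. -/
/-! ### Averaging over signs, and determinants with prescribed columns -/

namespace SpechtBn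
open MvPolynomial

/-- Invariance of `I` on the level of points: the zero set of `I` is stable under signed
permutations of the coordinates. -/
theorem eval_signed_perm {K : Type*} [Field K] {n : ℕ}
    {I : Ideal (MvPolynomial (Fin n) K)} (hI : BnInvariantIdeal n K I)
    {P : MvPolynomial (Fin n) K} (hP : P ∈ I) {z : Fin n → K}
    (hz : ∀ f ∈ I, eval z f = 0) (τ : Fin n → K) (hτ : IsSigns τ) (ρ : Equiv.Perm (Fin n)) :
    eval (fun i => τ i * z (ρ i)) P = 0 := by
  have h := hz _ (hI P hP (fun i => τ (ρ.symm i)) (fun i => hτ _) ρ)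
  rw [bnAct, aeval_def, ← coe_eval₂Hom, ← RingHom.comp_apply] at h
  rw [← h]
  congr 1
  ext i <;> simp

theorem sum_signs_pow {K : Type*} [Field K] [CharZero K] [DecidableEq K] (a : ℕ) :
    ∑ s ∈ ({1, -1} : Finset K), s ^ a = if Even a then 2 else 0 := by
  have h : (1 : K) ≠ -1 := by
    intro h
    have : (2 : K) = 0 := by linear_combination h
    norm_num at this
  rw [Finset.sum_pair h]
  split_ifs with ha
  · rw [ha.neg_pow]; norm_num
  · rw [(Nat.not_even_iff_odd.1 ha).neg_pow]; norm_num

/-- Averaging over the sign changes: the terms of `P` whose exponents have the parities of `e`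
vanish on their own at every permutation of a zero of `I`. -/
theorem parity_part_eq_zero {K : Type*} [Field K] [CharZero K] {n : ℕ}
    {I : Ideal (MvPolynomial (Fin n) K)} (hI : BnInvariantIdeal n K I)
    {P : MvPolynomial (Fin n) K} (hP : P ∈ I) {z : Fin n → K}
    (hz : ∀ f ∈ I, eval z f = 0) (e : Fin n →₀ ℕ) (ρ : Equiv.Perm (Fin n)) :
    ∑ m ∈ P.support with ∀ i, Even (e i + m i),
      coeff m P * ∏ i, z (ρ i) ^ m i = 0 := by
  classical
  have h : ∑ τ ∈ Fintype.piFinset (fun _ : Fin n => ({1, -1} : Finset K)),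
      (∏ i, τ i ^ e i) * eval (fun i => τ i * z (ρ i)) P = 0 := by
    apply Finset.sum_eq_zero
    intro τ hτ
    rw [eval_signed_perm hI hP hz τ _ ρ, mul_zero]
    intro i
    simpa using Fintype.mem_piFinset.1 hτ i
  simp_rw [eval_eq', Finset.mul_sum] at h
  rw [Finset.sum_comm] at h
  have h2 : ∀ m : Fin n →₀ ℕ, ∑ τ ∈ Fintype.piFinset (fun _ : Fin n => ({1, -1} : Finset K)),
      (∏ i, τ i ^ e i) * (coeff m P * ∏ i, (τ i * z (ρ i)) ^ m i) =
      if ∀ i, Even (e i + m i) then (2 : K) ^ n * (coeff m P * ∏ i, z (ρ i) ^ m i) else 0 := by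
    intro m
    have : ∀ τ : Fin n → K, (∏ i, τ i ^ e i) * (coeff m P * ∏ i, (τ i * z (ρ i)) ^ m i) =
        (∏ i, τ i ^ (e i + m i)) * (coeff m P * ∏ i, z (ρ i) ^ m i) := by
      intro τ
      simp_rw [mul_pow, pow_add, Finset.prod_mul_distrib]
      ring
    simp_rw [this]
    rw [← Finset.sum_mul,
      ← Finset.prod_univ_sum (fun _ : Fin n => ({1, -1} : Finset K)) (fun i s => s ^ (e i + m i))]
    simp_rw [sum_signs_pow]
    split_ifs with hp
    · simp [hp]
    · push Not at hp
      obtain ⟨i, hi⟩ := hp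
      rw [Finset.prod_eq_zero (Finset.mem_univ i), zero_mul]
      simp [Nat.not_even_iff_odd.2 (Nat.not_even_iff_odd.1 hi)]
  simp_rw [h2] at h
  rw [← Finset.sum_filter, ← Finset.mul_sum] at h
  exact (mul_eq_zero.1 h).resolve_left (pow_ne_zero _ two_ne_zero)

/-- The matrix whose rows indexed by `i` are the monomials `x ^ a i` evaluated at the points
`z j` lying in the same column as `i`; the indices with `κ i = none` are columns of height one. -/
def colMatrix {K : Type*} [Field K] {n : ℕ} (κ : Fin n → Option (Fin n)) (a : Fin n → ℕ)
    (z : Fin n → K) : Matrix (Fin n) (Fin n) K :=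
  fun i j => if κ i = κ j ∧ (κ i = none → i = j) then z j ^ a i else 0

/-- Two equal exponents in one column give two equal rows. -/
theorem det_colMatrix_eq_zero {K : Type*} [Field K] {n : ℕ} (κ : Fin n → Option (Fin n))
    (a : Fin n → ℕ) (z : Fin n → K) {i j : Fin n} {c : Fin n} (hij : i ≠ j) (hi : κ i = some c)
    (hj : κ j = some c) (ha : a i = a j) : (colMatrix κ a z).det = 0 := by
  apply Matrix.det_zero_of_row_eq hij
  funext k
  simp [colMatrix, hi, hj, ha]

/-- A product of Vandermonde-type determinants: nonzero because a nonzero polynomial of degree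
at most `k` has at most `k` roots. -/
theorem det_colMatrix_ne_zero {K : Type*} [Field K] {n : ℕ} (κ : Fin n → Option (Fin n))
    (a b p : Fin n → ℕ) (z : Fin n → K)
    (ha : ∀ i c, κ i = some c → a i = 2 * b i + p c)
    (ha0 : ∀ i, κ i = none → a i = 0)
    (hb : ∀ i c, κ i = some c → b i < (Finset.univ.filter fun j => κ j = some c).card)
    (hbinj : ∀ i j c, κ i = some c → κ j = some c → b i = b j → i = j)
    (hz : ∀ i j c, κ i = some c → κ j = some c → z i ^ 2 = z j ^ 2 → i = j)
    (hnz : ∀ i c, κ i = some c → p c ≠ 0 → z i ≠ 0) : (colMatrix κ a z).det ≠ 0 := by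
  classical
  intro hdet
  obtain ⟨v, hv0, hv⟩ := Matrix.exists_vecMul_eq_zero_iff.2 hdet
  apply hv0
  have hv' : ∀ j, ∑ i, v i * (if κ i = κ j ∧ (κ i = none → i = j) then z j ^ a i else 0) = 0 :=
    fun j => congrFun hv j
  funext i
  rcases hκ : κ i with _ | c
  · have := hv' i
    rw [Finset.sum_eq_single i] at this
    · simpa [ha0 i hκ] using this
    · intro k _ hki
      rw [if_neg, mul_zero]
      rintro ⟨h1, h2⟩
      exact hki (h2 (h1.trans hκ))
    · simp
  set F := Finset.univ.filter fun j => κ j = some c with hF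
  let q : Polynomial K := ∑ k ∈ F, Polynomial.C (v k) * Polynomial.X ^ b k
  have hq : q = 0 := by
    refine Polynomial.eq_zero_of_natDegree_lt_card_of_eval_eq_zero' q (F.image fun j => z j ^ 2)
      ?_ ?_
    · intro x hx
      obtain ⟨j, hj, rfl⟩ := Finset.mem_image.1 hx
      have hjc : κ j = some c := by simpa [hF] using hj
      have h1 := hv' j
      have h2 : z j ^ p c * Polynomial.eval (z j ^ 2) q = 0 := by
        rw [← h1, Polynomial.eval_finsetSum, Finset.mul_sum, hF, Finset.sum_filter]
        apply Finset.sum_congr rfl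
        intro k _
        by_cases hk : κ k = some c
        · simp only [hk, hjc, ha k c hk]
          simp
          ring
        · simp [hk, hjc]
      rcases mul_eq_zero.1 h2 with h3 | h3
      · have hp : p c ≠ 0 := by
          intro hp
          simp [hp] at h3
        exact absurd (pow_eq_zero_iff hp |>.1 h3) (hnz j c hjc hp)
      · exact h3
    · rw [Finset.card_image_of_injOn]
      · have hpos : 0 < F.card := Finset.card_pos.2 ⟨i, by simp [hF, hκ]⟩
        refine lt_of_le_of_lt (Polynomial.natDegree_sum_le_of_forall_le (n := F.card - 1) _ _ ?_)
          (by omega)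
        intro k hk
        have : b k < F.card := hb k c (by simpa [hF] using hk)
        exact (Polynomial.natDegree_C_mul_X_pow_le _ _).trans (by omega)
      · intro j hj k hk h
        exact hz j k c (by simpa [hF] using hj) (by simpa [hF] using hk) h
  have h3 : q.coeff (b i) = v i := by
    simp only [q, Polynomial.finsetSum_coeff, Polynomial.coeff_C_mul_X_pow]
    rw [Finset.sum_eq_single i]
    · simp
    · intro k hk hki
      rw [if_neg]
      intro h
      exact hki (hbinj k i c (by simpa [hF] using hk) hκ h.symm)
    · simp [hF, hκ]
  rw [← h3, hq]
  simp

end SpechtBn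

/-! ### Antisymmetrization of `P` -/

namespace SpechtBn
open MvPolynomial

/-- An injective labelling of `F` by `0, …, |F| - 1`. -/
theorem exists_staircase {α : Type*} [DecidableEq α] (F : Finset α) :
    ∃ u : α → ℕ, Set.InjOn u F ∧ (∀ i ∈ F, u i < F.card) ∧
      ∑ i ∈ F, u i = ∑ x ∈ Finset.range F.card, x := by
  refine ⟨fun i => if h : i ∈ F then (F.equivFin ⟨i, h⟩ : ℕ) else 0, ?_, ?_, ?_⟩
  · intro i hi j hj h
    have hi' : i ∈ F := hi
    have hj' : j ∈ F := hj
    simp only [hi', hj', dif_pos] at h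
    have := F.equivFin.injective (Fin.ext h)
    simpa using this
  · intro i hi
    simp only [hi, dif_pos]
    exact Fin.is_lt _
  · rw [← Finset.sum_coe_sort, ← Fin.sum_univ_eq_sum_range (fun x => x), ← F.equivFin.sum_comp]
    apply Finset.sum_congr rfl
    intro i _
    simp

theorem sum_range_le_of_injOn {α : Type*} [DecidableEq α] (F : Finset α) (b : α → ℕ)
    (hb : Set.InjOn b F) : ∑ x ∈ Finset.range F.card, x ≤ ∑ i ∈ F, b i := by
  rw [← Finset.sum_image (f := fun x => x) hb, ← Finset.card_image_of_injOn hb]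
  induction F.image b using Finset.induction_on_max with
  | empty => simp
  | insert a s hs ih =>
    have ha : a ∉ s := fun h => lt_irrefl _ (hs a h)
    have hcard : s.card ≤ a := by
      simpa using Finset.card_le_card (fun x hx => Finset.mem_range.2 (hs x hx) : s ⊆ Finset.range a)
    rw [Finset.card_insert_of_notMem ha, Finset.sum_insert ha, Finset.sum_range_succ]
    omega

/-- The degree count. Column `c` consists of the variable `c` and `e c / 2` further variables which
do not occur in the top degree part of `P`; the latter are multiplied by the staircase `w`. A term
`m` of `P` with the parities of `e` for which `m + w` has distinct exponents within each column has
degree at least that of `e` on each column, so it lies in the top degree part, hence involves none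
of the further variables, hence equals `e`. -/
theorem exponent_eq_of_injOn {K : Type*} [Field K] {n : ℕ} {P : MvPolynomial (Fin n) K}
    {e : Fin n →₀ ℕ} (hd : ∑ i, e i = P.totalDegree)
    (κ : Fin n → Option (Fin n)) (h1 : ∀ c, e c ≠ 0 → κ c = some c)
    (h2 : ∀ i ∈ (homogeneousComponent P.totalDegree P).vars, e i = 0 → κ i = none)
    (hcard : ∀ c, e c ≠ 0 → (Finset.univ.filter fun i => κ i = some c).card = e c / 2 + 1)
    (u : Fin n → Fin n → ℕ)
    (hu : ∀ c, e c ≠ 0 → ∑ i ∈ (Finset.univ.filter fun i => κ i = some c).erase c, u c i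
      = ∑ x ∈ Finset.range (e c / 2), x)
    (w : Fin n → ℕ) (hw0 : ∀ c, e c ≠ 0 → w c = 0)
    (hw : ∀ i c, e i = 0 → κ i = some c → w i = 2 * u c i + e c % 2)
    {m : Fin n →₀ ℕ} (hm : coeff m P ≠ 0) (hpar : ∀ i, Even (e i + m i))
    (hinj : ∀ i j c, e c ≠ 0 → κ i = some c → κ j = some c → m i + w i = m j + w j → i = j) :
    m = e := by
  classical
  have he0 : ∀ i c, κ i = some c → i ≠ c → e i = 0 := by
    intro i c hi hic
    by_contra h
    have := h1 i h
    rw [hi] at this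
    exact hic (Option.some.inj this).symm
  have hle : ∀ c, e c ≠ 0 → e c ≤ ∑ i ∈ Finset.univ.filter (fun i => κ i = some c), m i := by
    intro c hc
    set F := Finset.univ.filter (fun i => κ i = some c) with hF
    have hcF : c ∈ F := by simp [hF, h1 c hc]
    have hpc := hpar c
    rw [Nat.even_iff] at hpc
    -- All exponents of `m + w` in column `c` have the parity of `e c`; their halves are distinct.
    have hm2 : ∀ i ∈ F.erase c, m i = 2 * (m i / 2) ∧ (m i + w i) / 2 = m i / 2 + u c i ∧
        (m i + w i) % 2 = e c % 2 := by
      intro i hi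
      have hic := Finset.ne_of_mem_erase hi
      have hiF : κ i = some c := by simpa [hF] using Finset.mem_of_mem_erase hi
      have h0 := he0 i c hiF hic
      have := hpar i
      rw [Nat.even_iff] at this
      have hwi := hw i c h0 hiF
      omega
    have hpF : ∀ i ∈ F, (m i + w i) % 2 = e c % 2 := by
      intro i hi
      by_cases hic : i = c
      · subst hic
        rw [hw0 i hc]; omega
      · exact (hm2 i (Finset.mem_erase.2 ⟨hic, hi⟩)).2.2
    have hb := sum_range_le_of_injOn F (fun i => (m i + w i) / 2) (by
      intro i hi j hj h
      have h3 := hpF i hi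
      have h4 := hpF j hj
      have hi' : κ i = some c := by simpa [hF] using hi
      have hj' : κ j = some c := by simpa [hF] using hj
      refine hinj i j c hc hi' hj' ?_
      have h' : (m i + w i) / 2 = (m j + w j) / 2 := h
      omega)
    rw [hcard c hc, Finset.sum_range_succ, ← Finset.add_sum_erase _ _ hcF,
      Finset.sum_congr rfl (fun i hi => (hm2 i hi).2.1), Finset.sum_add_distrib, hu c hc,
      hw0 c hc] at hb
    rw [← Finset.add_sum_erase _ _ hcF, Finset.sum_congr rfl (fun i hi => (hm2 i hi).1),
      ← Finset.mul_sum]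
    omega
  have hmd : ∑ i, m i ≤ P.totalDegree := by
    have := le_totalDegree (mem_support_iff.2 hm)
    rwa [Finsupp.sum_fintype _ _ (fun _ => rfl)] at this
  -- The columns are disjoint, so the columnwise bounds `hle` add up.
  have hge : ∑ i, e i ≤ ∑ i, m i := by
    calc ∑ i, e i ≤ ∑ c, ∑ i, (if κ i = some c then m i else 0) := by
          apply Finset.sum_le_sum
          intro c _
          by_cases hc : e c = 0
          · simp [hc]
          · rw [← Finset.sum_filter]
            exact hle c hc
      _ = ∑ i, ∑ c, (if κ i = some c then m i else 0) := Finset.sum_comm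
      _ ≤ ∑ i, m i := by
          apply Finset.sum_le_sum
          intro i _
          rcases hκ : κ i with _ | c
          · simp
          · simp
  have hmtop : coeff m (homogeneousComponent P.totalDegree P) ≠ 0 := by
    rw [coeff_homogeneousComponent, if_pos]
    · exact hm
    · rw [Finsupp.degree_eq_sum]; omega
  have hm0 : ∀ i, m i ≠ 0 → i ∈ (homogeneousComponent P.totalDegree P).vars := fun i hi =>
    (mem_vars_iff_mem_support i).2 ⟨m, mem_support_iff.2 hmtop, Finsupp.mem_support_iff.2 hi⟩
  have hle' : ∀ c, e c ≤ m c := by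
    intro c
    by_cases hc : e c = 0
    · simp [hc]
    · refine (hle c hc).trans (le_of_eq ?_)
      apply Finset.sum_eq_single c
      · intro i hi hic
        have hiF : κ i = some c := by simpa using hi
        by_contra h
        have := h2 i (hm0 i h) (he0 i c hiF hic)
        simp [this] at hiF
      · simp [h1 c hc]
  have hsum : ∑ i, e i = ∑ i, m i := by omega
  ext i
  exact ((Finset.sum_eq_sum_iff_of_le (fun i _ => hle' i)).1 hsum i (Finset.mem_univ i)).symm

/-- The antisymmetrization argument, for a point whose coordinates are already placed in columns:
variable `c` of the monomial `e` sits in column `some c`, and the other variables of the top degree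
part are in columns of height one. Multiplying `P` by the staircase monomial `w` and
antisymmetrizing over the column group leaves `coeff e P` times a nonzero product of Vandermonde
determinants, whereas each summand vanishes when the point is a zero of `I`. -/
theorem core {K : Type*} [Field K] [CharZero K] {n : ℕ}
    {I : Ideal (MvPolynomial (Fin n) K)} (hI : BnInvariantIdeal n K I)
    {P : MvPolynomial (Fin n) K} (hP : P ∈ I) {z : Fin n → K}
    (hz : ∀ f ∈ I, eval z f = 0) {e : Fin n →₀ ℕ} (he : coeff e P ≠ 0)
    (hd : ∑ i, e i = P.totalDegree)
    (κ : Fin n → Option (Fin n)) (h1 : ∀ c, e c ≠ 0 → κ c = some c)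
    (h2 : ∀ i ∈ (homogeneousComponent P.totalDegree P).vars, e i = 0 → κ i = none)
    (hcard : ∀ c, e c ≠ 0 → (Finset.univ.filter fun i => κ i = some c).card = e c / 2 + 1)
    (hsupp : ∀ i c, κ i = some c → e c ≠ 0)
    (hinj : ∀ i j c, κ i = some c → κ j = some c → z i ^ 2 = z j ^ 2 → i = j)
    (hnz : ∀ i c, κ i = some c → Odd (e c) → z i ≠ 0) : False := by
  classical
  choose u hu1 hu2 hu3 using fun c : Fin n =>
    exists_staircase ((Finset.univ.filter fun i => κ i = some c).erase c)
  have hcF : ∀ c, e c ≠ 0 →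
      ((Finset.univ.filter fun i => κ i = some c).erase c).card = e c / 2 := by
    intro c hc
    rw [Finset.card_erase_of_mem (by simp [h1 c hc]), hcard c hc, Nat.add_sub_cancel]
  have he0 : ∀ i c, κ i = some c → i ≠ c → e i = 0 := by
    intro i c hi hic
    by_contra h
    have := h1 i h
    rw [hi] at this
    exact hic (Option.some.inj this).symm
  let w : Fin n → ℕ := fun i =>
    if e i ≠ 0 then 0 else (κ i).elim 0 fun c => 2 * u c i + e c % 2
  have hw0 : ∀ c, e c ≠ 0 → w c = 0 := fun c hc => by simp [w, hc]
  have hw : ∀ i c, e i = 0 → κ i = some c → w i = 2 * u c i + e c % 2 :=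
    fun i c hi hκ => by simp [w, hi, hκ]
  -- The antisymmetrization, as a sum of determinants by the Leibniz formula. Permutations not
  -- preserving the columns contribute zero to a determinant.
  have hmain : ∑ m ∈ P.support with ∀ i, Even (e i + m i),
      coeff m P * (colMatrix κ (fun i => m i + w i) z).det = 0 := by
    have : ∀ m : Fin n →₀ ℕ, (colMatrix κ (fun i => m i + w i) z).det =
        ∑ ρ : Equiv.Perm (Fin n), ((Equiv.Perm.sign ρ : ℤ) : K) *
          (∏ i, if κ i = κ (ρ i) ∧ (κ i = none → i = ρ i) then z (ρ i) ^ w i else 0) *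
          ∏ i, z (ρ i) ^ m i := by
      intro m
      rw [← Matrix.det_transpose, Matrix.det_apply']
      apply Finset.sum_congr rfl
      intro ρ _
      rw [mul_assoc, ← Finset.prod_mul_distrib]
      congr 1
      apply Finset.prod_congr rfl
      intro i _
      rw [Matrix.transpose_apply, colMatrix, ite_mul, zero_mul, pow_add, mul_comm]
    simp_rw [this, Finset.mul_sum]
    rw [Finset.sum_comm]
    apply Finset.sum_eq_zero
    intro ρ _
    have h := parity_part_eq_zero hI hP hz e ρ
    simp_rw [mul_left_comm (coeff _ P)]
    rw [← Finset.mul_sum, h, mul_zero]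
  rw [Finset.sum_eq_single e] at hmain
  · refine (mul_ne_zero he ?_) hmain
    refine det_colMatrix_ne_zero κ _ (fun i => if e i ≠ 0 then e i / 2 else
      (κ i).elim 0 fun c => u c i) (fun c => e c % 2) z ?_ ?_ ?_ ?_ hinj ?_
    · intro i c hi
      by_cases hic : i = c
      · subst hic
        have := hsupp i i hi
        simp only [hw0 i this, this, ne_eq, not_false_eq_true, if_true]
        omega
      · have h0 := he0 i c hi hic
        simp [hw i c h0 hi, h0, hi]
    · intro i hi
      have : e i = 0 := by
        by_contra h
        simp [h1 i h] at hi
      simp [w, this, hi]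
    · intro i c hi
      have hc := hsupp i c hi
      rw [hcard c hc]
      by_cases hic : i = c
      · subst hic
        simp [hc]
      · have h0 := he0 i c hi hic
        have := hu2 c i (by simp [hi, hic])
        rw [hcF c hc] at this
        simp only [h0, ne_eq, not_true_eq_false, if_false, hi, Option.elim]
        omega
    · have key : ∀ i c, κ i = some c → i ≠ c → e i = 0 ∧ u c i < e c / 2 := by
        intro i c hi hic
        have h0 := he0 i c hi hic
        have := hu2 c i (by simp [hi, hic])
        rw [hcF c (hsupp i c hi)] at this
        exact ⟨h0, this⟩
      intro i j c hi hj hb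
      by_cases hic : i = c <;> by_cases hjc : j = c
      · rw [hic, hjc]
      · subst hic
        obtain ⟨h0, hlt⟩ := key j i hj hjc
        simp [h0, hj, hsupp i i hi] at hb
        omega
      · subst hjc
        obtain ⟨h0, hlt⟩ := key i j hi hic
        simp [h0, hi, hsupp j j hj] at hb
        omega
      · obtain ⟨h0, -⟩ := key i c hi hic
        obtain ⟨h0', -⟩ := key j c hj hjc
        simp [h0, h0', hi, hj] at hb
        exact hu1 c (by simp [hi, hic]) (by simp [hj, hjc]) hb
    · intro i c hi hp
      exact hnz i c hi (Nat.odd_iff.2 (by omega))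
  · intro m hm hme
    simp only [Finset.mem_filter, mem_support_iff] at hm
    have : ∃ i j c, κ i = some c ∧ κ j = some c ∧ m i + w i = m j + w j ∧ i ≠ j := by
      by_contra hcon
      push Not at hcon
      refine hme (exponent_eq_of_injOn hd κ h1 h2 hcard u ?_ w hw0 hw hm.1 hm.2
        fun i j c _ => hcon i j c)
      intro c hc
      rw [hu3 c, hcF c hc]
    obtain ⟨i, j, c, hi, hj, ha, hij⟩ := this
    rw [det_colMatrix_eq_zero κ _ z hij hi hj ha, mul_zero]
  · intro h
    exact absurd (Finset.mem_filter.2 ⟨mem_support_iff.2 he, fun i => ⟨e i, rfl⟩⟩) h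

end SpechtBn

/-! ### A Gale–Ryser theorem -/

namespace SpechtBn
open MvPolynomial

/-- The `r` largest elements of `L` with respect to `s`. -/
theorem exists_top_subset {γ : Type*} [DecidableEq γ] (s : γ → ℕ) (L : Finset γ) (r : ℕ)
    (hr : r ≤ L.card) :
    ∃ T ⊆ L, T.card = r ∧ ∀ c ∈ T, ∀ c' ∈ L, c' ∉ T → s c' ≤ s c := by
  induction r with
  | zero => exact ⟨∅, by simp, by simp, by simp⟩
  | succ r ih =>
    obtain ⟨T, hTL, hT, htop⟩ := ih (by omega)
    have hne : (L \ T).Nonempty := by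
      rw [← Finset.card_pos, Finset.card_sdiff_of_subset hTL]; omega
    obtain ⟨x, hx, hmax⟩ := Finset.exists_max_image (L \ T) s hne
    rw [Finset.mem_sdiff] at hx
    refine ⟨insert x T, Finset.insert_subset hx.1 hTL, ?_, ?_⟩
    · rw [Finset.card_insert_of_notMem hx.2, hT]
    · intro c hc c' hc' hn
      rw [Finset.mem_insert, not_or] at hn
      rcases Finset.mem_insert.1 hc with rfl | hc
      · exact hmax c' (Finset.mem_sdiff.2 ⟨hc', hn.2⟩)
      · exact htop c hc c' hc' hn.2

/-- Filling one cell in each of the `r` highest columns of `L`: this lowers `∑ min (s c) k` only by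
the amount by which `r` exceeds the number of columns of `L` higher than `k`. -/
theorem greedy_step {γ : Type*} [Fintype γ] [DecidableEq γ] (s : γ → ℕ) (L : Finset γ)
    (hpos : ∀ c ∈ L, 0 < s c) (r : ℕ) (hr : r ≤ L.card) :
    ∃ T ⊆ L, T.card = r ∧ ∀ k b, b ≤ ∑ c, min (s c) k →
      b + r ≤ ∑ c, min (s c) k + (L.filter fun c => k < s c).card →
      b ≤ ∑ c, min (s c - if c ∈ T then 1 else 0) k := by
  obtain ⟨T, hTL, hT, htop⟩ := exists_top_subset s L r hr
  refine ⟨T, hTL, hT, fun k b h1 h2 => ?_⟩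
  -- Removing a cell from column `c` changes `min (s c) k` only if `s c ≤ k`.
  have hloss : ∑ c, min (s c) k = ∑ c, min (s c - if c ∈ T then 1 else 0) k
      + (T.filter fun c => s c ≤ k).card := by
    have hT' : (T.filter fun c => s c ≤ k) = Finset.univ.filter fun c => c ∈ T ∧ s c ≤ k := by
      ext c; simp
    rw [hT', Finset.card_filter, ← Finset.sum_add_distrib]
    apply Finset.sum_congr rfl
    intro c _
    by_cases hc : c ∈ T
    · have := hpos c (hTL hc)
      simp only [hc, if_true, true_and]
      split_ifs <;> omega
    · simp [hc]
  -- If some chosen column has height at most `k`, all columns of `L` higher than `k` are chosen.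
  by_cases hall : ∃ c ∈ T, s c ≤ k
  · obtain ⟨c, hc, hck⟩ := hall
    have hsub : L.filter (fun c => k < s c) ⊆ T.filter (fun c => ¬ s c ≤ k) := by
      intro x hx
      rw [Finset.mem_filter] at hx
      have hxT : x ∈ T := by
        by_contra hxT
        have := htop c hc x hx.1 hxT
        omega
      simp [hxT, hx.2]
    have h3 := Finset.card_le_card hsub
    have h4 := Finset.card_filter_add_card_filter_not (s := T) (fun c => s c ≤ k)
    omega
  · push Not at hall
    have : (T.filter fun c => s c ≤ k).card = 0 := by
      rw [Finset.card_eq_zero, Finset.filter_eq_empty_iff]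
      intro x hx
      have := hall x hx
      omega
    omega

theorem sum_min_succ {γ : Type*} [Fintype γ] (s : γ → ℕ) (k : ℕ) :
    ∑ c, min (s c) (k + 1) = ∑ c, min (s c) k + (Finset.univ.filter fun c => k < s c).card := by
  rw [Finset.card_filter, ← Finset.sum_add_distrib]
  apply Finset.sum_congr rfl
  intro c _
  split_ifs <;> omega

/-- The sufficient direction of the Gale–Ryser theorem: under the Hall type condition `h`, each
row `v` can be given a set `E v` of `r v` columns such that column `c` is used at most `s c`
times. -/
theorem gale_ryser {α γ : Type*} [DecidableEq α] [Fintype γ] [DecidableEq γ] (r : α → ℕ)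
    (V : Finset α) (s : γ → ℕ) (h : ∀ X ⊆ V, ∑ v ∈ X, r v ≤ ∑ c, min (s c) X.card) :
    ∃ E : α → Finset γ, (∀ v ∈ V, (E v).card = r v) ∧
      ∀ c, (V.filter fun v => c ∈ E v).card ≤ s c := by
  induction V using Finset.induction_on generalizing s with
  | empty => exact ⟨fun _ => ∅, by simp, by simp⟩
  | insert v V hv ih =>
    obtain ⟨T, hTL, hT, hstep⟩ := greedy_step s (Finset.univ.filter fun c => 0 < s c) (by simp)
      (r v) (by
        have h1 := h {v} (by simp)
        have h2 := sum_min_succ s 0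
        simp only [Finset.sum_singleton, Finset.card_singleton] at h1
        simp only [Nat.min_zero, Finset.sum_const_zero, zero_add] at h2
        omega)
    obtain ⟨E, hE, hcol⟩ := ih (fun c => s c - if c ∈ T then 1 else 0) (by
      intro X hX
      apply hstep
      · exact h X (hX.trans (Finset.subset_insert _ _))
      · have hvX : v ∉ X := fun h => hv (hX h)
        have h1 := h (insert v X) (Finset.insert_subset_insert _ hX)
        rw [Finset.sum_insert hvX, Finset.card_insert_of_notMem hvX, sum_min_succ] at h1
        rw [Finset.filter_filter]
        have : (Finset.univ.filter fun c => 0 < s c ∧ X.card < s c)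
            = Finset.univ.filter fun c => X.card < s c := by
          apply Finset.filter_congr
          intro c _
          omega
        rw [this]
        omega)
    refine ⟨Function.update E v T, ?_, ?_⟩
    · intro x hx
      by_cases hxv : x = v
      · subst hxv; simpa using hT
      · rw [Function.update_of_ne hxv]
        exact hE x (Finset.mem_of_mem_insert_of_ne hx hxv)
    · intro c
      have h1 : (V.filter fun x => c ∈ Function.update E v T x) = V.filter fun x => c ∈ E x := by
        apply Finset.filter_congr
        intro x hx
        rw [Function.update_of_ne (by rintro rfl; exact hv hx)]
      have h2 := hcol c
      rw [Finset.filter_insert, h1, Function.update_self]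
      split_ifs with hc
      · rw [Finset.card_insert_of_notMem (by simp [hv])]
        have : 0 < s c := by simpa using hTL hc
        simp only [hc, if_true] at h2
        omega
      · simpa [hc] using h2

/-- The Gale–Ryser theorem with one restricted row: the value `0` may only be placed in the columns
`L`. It is placed first, greedily, and then there are no restrictions on the remaining values. -/
theorem exists_placement {K : Type*} [Field K] [DecidableEq K] {n : ℕ} (y : Fin n → K)
    {γ : Type*} [Fintype γ] [DecidableEq γ] (s : γ → ℕ) (L : Finset γ) (htot : ∑ c, s c = n)
    (H1 : ∀ X : Finset K, 0 ∉ X →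
      (Finset.univ.filter fun j => y j ∈ X).card ≤ ∑ c, min (s c) X.card)
    (H2 : ∀ X : Finset K, 0 ∉ X → (Finset.univ.filter fun j => y j ∈ insert 0 X).card
      ≤ ∑ c, min (s c) X.card + (L.filter fun c => X.card < s c).card) :
    ∃ κ : Fin n → γ, (∀ c, (Finset.univ.filter fun j => κ j = c).card = s c) ∧
      (∀ i j, κ i = κ j → y i = y j → i = j) ∧ ∀ i, y i = 0 → κ i ∈ L := by
  let r : K → ℕ := fun v => (Finset.univ.filter fun j => y j = v).card
  have hr : ∀ X : Finset K, (Finset.univ.filter fun j => y j ∈ X).card = ∑ v ∈ X, r v := by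
    intro X
    rw [Finset.card_eq_sum_card_fiberwise (f := y) (t := X) (by intro j; simp)]
    apply Finset.sum_congr rfl
    intro v hv
    rw [Finset.filter_filter]
    congr 1
    apply Finset.filter_congr
    intro j _
    constructor
    · exact fun h => h.2
    · rintro rfl; exact ⟨hv, rfl⟩
  obtain ⟨T, hTL, hT, hstep⟩ := greedy_step s (L.filter fun c => 0 < s c) (by simp)
    (r 0) (by
      have := H2 ∅ (by simp)
      rw [hr, Finset.sum_insert (by simp)] at this
      have hL : (L.filter fun c => (∅ : Finset K).card < s c) = L.filter fun c => 0 < s c :=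
        Finset.filter_congr (by simp)
      rw [hL] at this
      simpa only [Finset.card_empty, Nat.min_zero, Finset.sum_const_zero, zero_add,
        Finset.sum_empty, add_zero] using this)
  obtain ⟨E, hE, hcol⟩ := gale_ryser r ((Finset.univ.image y).erase 0)
    (fun c => s c - if c ∈ T then 1 else 0) (by
      intro X hX
      have h0 : (0 : K) ∉ X := fun h => by simpa using hX h
      apply hstep
      · rw [← hr]; exact H1 X h0
      · have h2 := H2 X h0
        rw [hr, Finset.sum_insert h0] at h2
        rw [Finset.filter_filter]
        have : (L.filter fun c => 0 < s c ∧ X.card < s c)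
            = L.filter fun c => X.card < s c := by
          apply Finset.filter_congr
          intro c _
          omega
        rw [this]
        omega)
  -- `E' v` is the set of columns which contain the value `v`.
  let E' : K → Finset γ := fun v =>
    if v = 0 then T else if v ∈ Finset.univ.image y then E v else ∅
  have hE' : ∀ v, (Finset.univ.filter fun j => y j = v).card = (E' v).card := by
    intro v
    by_cases hv : v = 0
    · subst hv
      simp only [E', if_true, hT, r]
    · by_cases hv' : v ∈ Finset.univ.image y
      · simp only [E', hv, hv', if_true, if_false]
        exact (hE v (Finset.mem_erase.2 ⟨hv, hv'⟩)).symm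
      · simp only [E', hv, hv', if_false, Finset.card_empty, Finset.card_eq_zero,
          Finset.filter_eq_empty_iff]
        intro j _ hj
        exact hv' (Finset.mem_image.2 ⟨j, Finset.mem_univ _, hj⟩)
  let f := fun v => Finset.equivOfCardEq (hE' v)
  let κ : Fin n → γ := fun j => (f (y j) ⟨j, by simp⟩ : γ)
  have hκE : ∀ j, κ j ∈ E' (y j) := fun j => (f (y j) ⟨j, by simp⟩).2
  have hinj : ∀ i j, κ i = κ j → y i = y j → i = j := by
    have key : ∀ v i (hi : y i = v) j (hj : y j = v),
        ((f v ⟨i, by simp [hi]⟩ : E' v) : γ) = (f v ⟨j, by simp [hj]⟩ : E' v) → i = j := by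
      intro v i hi j hj h
      simpa using (f v).injective (Subtype.ext h)
    have hκ : ∀ v i (hi : y i = v), κ i = (f v ⟨i, by simp [hi]⟩ : E' v) := by
      rintro v i rfl; rfl
    intro i j h hy
    rw [hκ (y j) i hy, hκ (y j) j rfl] at h
    exact key _ i hy j rfl h
  have hle : ∀ c ∈ Finset.univ, (Finset.univ.filter fun j => κ j = c).card ≤ s c := by
    intro c _
    have h1 : (Finset.univ.filter fun j => κ j = c).card
        ≤ ((Finset.univ.image y).filter fun v => c ∈ E' v).card := by
      apply Finset.card_le_card_of_injOn y
      · intro j hj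
        have hj' : κ j = c := by simpa using hj
        have := hκE j
        rw [hj'] at this
        simp [this]
      · intro i hi j hj h
        have hi' : κ i = c := by simpa using hi
        have hj' : κ j = c := by simpa using hj
        exact hinj i j (hi'.trans hj'.symm) h
    have h2 : ((Finset.univ.image y).filter fun v => c ∈ E' v) ⊆
        (if c ∈ T then {0} else ∅) ∪
          ((Finset.univ.image y).erase 0).filter fun v => c ∈ E v := by
      intro v hv
      rw [Finset.mem_filter] at hv
      by_cases hv0 : v = 0
      · have : c ∈ T := by simpa [E', hv0] using hv.2
        simp [this, hv0]
      · have : c ∈ E v := by simpa only [E', hv0, hv.1, if_true, if_false] using hv.2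
        exact Finset.mem_union_right _ (by
          rw [Finset.mem_filter, Finset.mem_erase]; exact ⟨⟨hv0, hv.1⟩, this⟩)
    have h3 := (Finset.card_le_card h2).trans (Finset.card_union_le _ _)
    have h4 := hcol c
    by_cases hc : c ∈ T
    · have : 0 < s c := (Finset.mem_filter.1 (hTL hc)).2
      simp only [hc, if_true, Finset.card_singleton] at h3 h4
      omega
    · simp only [hc, if_false, Finset.card_empty] at h3 h4
      omega
  refine ⟨κ, ?_, hinj, ?_⟩
  -- No column is overfull and the total number of cells is `n`, so every column is full.
  · have hsum : ∑ c, (Finset.univ.filter fun j => κ j = c).card = ∑ c, s c := by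
      rw [htot, ← Finset.card_eq_sum_card_fiberwise (by intro j; simp)]
      simp
    intro c
    exact (Finset.sum_eq_sum_iff_of_le hle).1 hsum c (Finset.mem_univ c)
  · intro i hi
    have := hκE i
    simp only [E', hi, if_true] at this
    exact (Finset.mem_filter.1 (hTL this)).1

end SpechtBn

/-! ### The columns of `Γ*(m)` -/

namespace SpechtBn
open MvPolynomial

/-- `core` for an arbitrary partition of the coordinates into columns of the right heights; a
permutation of the coordinates brings it into the normal form required there. -/
theorem core_perm {K : Type*} [Field K] [CharZero K] {n : ℕ}
    {I : Ideal (MvPolynomial (Fin n) K)} (hI : BnInvariantIdeal n K I)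
    {P : MvPolynomial (Fin n) K} (hP : P ∈ I) {z : Fin n → K}
    (hz : ∀ f ∈ I, eval z f = 0) {e : Fin n →₀ ℕ} (he : coeff e P ≠ 0)
    (hd : ∑ i, e i = P.totalDegree)
    (κ : Fin n → Option (Fin n))
    (hnone : ((homogeneousComponent P.totalDegree P).vars.filter fun i => e i = 0).card ≤
      (Finset.univ.filter fun i => κ i = none).card)
    (hcard : ∀ c, e c ≠ 0 → (Finset.univ.filter fun i => κ i = some c).card = e c / 2 + 1)
    (hsupp : ∀ i c, κ i = some c → e c ≠ 0)
    (hinj : ∀ i j c, κ i = some c → κ j = some c → z i ^ 2 = z j ^ 2 → i = j)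
    (hnz : ∀ i c, κ i = some c → Odd (e c) → z i ≠ 0) : False := by
  classical
  set V := (homogeneousComponent P.totalDegree P).vars with hV
  have hex : ∀ c, ∃ i, e c ≠ 0 → κ i = some c := by
    intro c
    by_cases hc : e c = 0
    · exact ⟨c, fun h => absurd hc h⟩
    · have : 0 < (Finset.univ.filter fun i => κ i = some c).card := by rw [hcard c hc]; omega
      obtain ⟨i, hi⟩ := Finset.card_pos.1 this
      exact ⟨i, fun _ => by simpa using hi⟩
  choose g hg using hex
  obtain ⟨f, hf⟩ : ∃ f : V.filter (fun i => e i = 0) → Finset.univ.filter (fun i => κ i = none),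
      Function.Injective f := by
    obtain ⟨f⟩ := Function.Embedding.nonempty_of_card_le (α := V.filter (fun i => e i = 0))
      (β := Finset.univ.filter (fun i => κ i = none)) (by simpa only [Fintype.card_coe] using hnone)
    exact ⟨f, f.injective⟩
  let F : Fin n → Fin n := fun i => if h : i ∈ V.filter (fun i => e i = 0) then f ⟨i, h⟩ else g i
  have hF1 : ∀ c, e c ≠ 0 → κ (F c) = some c := by
    intro c hc
    have : c ∉ V.filter (fun i => e i = 0) := by simp [hc]
    simp only [F, this, dif_neg, not_false_eq_true]
    exact hg c hc
  have hF2 : ∀ i ∈ V, e i = 0 → κ (F i) = none := by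
    intro i hi h0
    have : i ∈ V.filter (fun i => e i = 0) := by simp [hi, h0]
    simp only [F, this, dif_pos]
    exact (Finset.mem_filter.1 (f ⟨i, this⟩).2).2
  let S : Finset (Fin n) := V ∪ Finset.univ.filter fun i => e i ≠ 0
  have hFinj : Set.InjOn F S := by
    intro i hi j hj h
    have hS : ∀ i, i ∈ S → e i ≠ 0 ∨ (i ∈ V ∧ e i = 0) := by
      intro i hi
      by_cases h : e i = 0
      · simp only [S, Finset.mem_union, Finset.mem_filter, h, ne_eq, not_true_eq_false,
          and_false, or_false] at hi
        exact Or.inr ⟨hi, h⟩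
      · exact Or.inl h
    rcases hS i hi with hi' | hi' <;> rcases hS j hj with hj' | hj'
    · have h1 := hF1 i hi'
      rw [h, hF1 j hj'] at h1
      exact (Option.some.inj h1).symm
    · have h1 := hF1 i hi'
      rw [h, hF2 j hj'.1 hj'.2] at h1
      simp at h1
    · have h1 := hF1 j hj'
      rw [← h, hF2 i hi'.1 hi'.2] at h1
      simp at h1
    · have h1 : i ∈ V.filter (fun i => e i = 0) := by simp [hi']
      have h2 : j ∈ V.filter (fun i => e i = 0) := by simp [hj']
      simp only [F, h1, h2, dif_pos] at h
      simpa using hf (Subtype.ext h)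
  obtain ⟨π', hπ'⟩ := Finset.exists_equiv_extend_of_card_eq (α := Fin n) (t := Finset.univ)
    (by simp) (Finset.subset_univ _) hFinj
  let π : Equiv.Perm (Fin n) := π'.trans (Equiv.subtypeUnivEquiv (by simp))
  have hπ : ∀ i ∈ S, π i = F i := hπ'
  refine core hI hP (z := z ∘ π) ?_ he hd (κ ∘ π) ?_ ?_ ?_ ?_ ?_ ?_
  · intro f hf
    have := eval_signed_perm hI hf hz (fun _ => 1) (fun _ => Or.inl rfl) π
    simp only [one_mul] at this
    exact this
  · intro c hc
    rw [Function.comp_apply, hπ c (by simp [S, hc])]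
    exact hF1 c hc
  · intro i hi h0
    rw [Function.comp_apply, hπ i (Finset.mem_union_left _ hi)]
    exact hF2 i hi h0
  · intro c hc
    rw [← hcard c hc]
    exact Finset.card_equiv π (by simp)
  · exact fun i c => hsupp _ c
  · intro i j c hi hj h
    exact π.injective (hinj _ _ c hi hj h)
  · exact fun i c => hnz _ c

/-- The column heights of `Γ*(m)`: a column for each variable (empty if the variable does not
occur in `m`), and `N` columns of height one. -/
def colHeight {n : ℕ} (e : Fin n →₀ ℕ) (N : ℕ) : Fin n ⊕ Fin N → ℕ :=
  Sum.elim (fun c => if e c = 0 then 0 else e c / 2 + 1) fun _ => 1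

/-- The columns belonging to the first component of `Γ*(m)`. -/
def leftCols {n : ℕ} (e : Fin n →₀ ℕ) (N : ℕ) : Finset (Fin n ⊕ Fin N) :=
  (Finset.univ.filter fun c => Even (e c)).disjSum Finset.univ

@[simp] theorem inl_mem_leftCols {n : ℕ} (e : Fin n →₀ ℕ) (N : ℕ) (c : Fin n) :
    Sum.inl c ∈ leftCols e N ↔ Even (e c) := by simp [leftCols]

@[simp] theorem inr_mem_leftCols {n : ℕ} (e : Fin n →₀ ℕ) (N : ℕ) (c : Fin N) :
    Sum.inr c ∈ leftCols e N := by simp [leftCols]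

@[simp] theorem colHeight_inl {n : ℕ} (e : Fin n →₀ ℕ) (N : ℕ) (c : Fin n) :
    colHeight e N (Sum.inl c) = if e c = 0 then 0 else e c / 2 + 1 := rfl

@[simp] theorem colHeight_inr {n : ℕ} (e : Fin n →₀ ℕ) (N : ℕ) (c : Fin N) :
    colHeight e N (Sum.inr c) = 1 := rfl

theorem sum_colHeight {n : ℕ} (e : Fin n →₀ ℕ) (N : ℕ) :
    ∑ c, colHeight e N c =
      d1F e + d2F e + (evenSupp e).card + (oddSupp e).card + N := by
  simp only [colHeight, Fintype.sum_sum_type, Sum.elim_inl, Sum.elim_inr, Finset.sum_const,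
    Finset.card_univ, Fintype.card_fin, smul_eq_mul, mul_one]
  rw [d1F, d2F, evenSupp, oddSupp, Finset.card_filter, Finset.card_filter, Finset.sum_filter,
    Finset.sum_filter, ← Finset.sum_add_distrib, ← Finset.sum_add_distrib,
    ← Finset.sum_add_distrib]
  congr 1
  apply Finset.sum_congr rfl
  intro c _
  by_cases h0 : e c = 0
  · simp [h0]
  · by_cases h : Even (e c)
    · simp [h0, h, Nat.not_odd_iff_even.2 h]
    · simp [h0, h, Nat.not_even_iff_odd.1 h]

/-- The padding `0` of `getD` is never larger than `k`, so padded entries are not counted. -/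
theorem card_filter_getD (l : List ℕ) (k N : ℕ) (h : l.length ≤ N) :
    ((Finset.range N).filter fun i => k < l.getD i 0).card = l.countP fun x => k < x := by
  rw [Finset.card_filter]
  induction l generalizing N with
  | nil => simp
  | cons a l ih =>
    obtain ⟨M, rfl⟩ : ∃ M, N = M + 1 := ⟨N - 1, by simp at h; omega⟩
    rw [Finset.sum_range_succ', List.countP_cons]
    simp only [List.getD_cons_succ, List.getD_cons_zero]
    rw [ih M (by simpa using h)]
    simp

theorem card_filter_sortedDesc {α : Type*} (S : Finset α) (f : α → ℕ) (k N : ℕ)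
    (h : S.card ≤ N) :
    ((Finset.range N).filter fun i => k < sortedDesc (S.val.map f) i).card =
      (S.filter fun x => k < f x).card := by
  unfold sortedDesc
  rw [card_filter_getD _ _ _ (by simpa using h), ← Multiset.coe_countP]
  have : (((S.val.map f).sort (· ≤ ·)).reverse : Multiset ℕ) = S.val.map f := by
    rw [Multiset.coe_reverse, Multiset.sort_eq]
  rw [this, Multiset.countP_map]
  simp [Finset.card_def]

theorem gammaStarSnd_eq {n : ℕ} (e : Fin n →₀ ℕ) (N k : ℕ) :
    gammaStarSnd e k =
      (Finset.univ.filter fun c => c ∉ leftCols e N ∧ k < colHeight e N c).card := by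
  have h : (Finset.univ.filter fun c => c ∉ leftCols e N ∧ k < colHeight e N c) =
      ((oddSupp e).filter fun i => k < e i / 2 + 1).map Function.Embedding.inl := by
    ext c
    rcases c with c | c
    · simp only [inl_mem_leftCols, colHeight_inl, oddSupp, Finset.mem_filter, Finset.mem_univ,
        true_and, Finset.mem_map, Function.Embedding.inl_apply,
        Sum.inl.injEq, exists_eq_right, Nat.not_even_iff_odd]
      constructor
      · rintro ⟨h1, h2⟩
        have : e c ≠ 0 := by rintro h; simp [h] at h1
        simp only [this, if_false] at h2
        exact ⟨h1, h2⟩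
      · rintro ⟨h1, h2⟩
        have : e c ≠ 0 := by rintro h; simp [h] at h1
        simp only [this, if_false]
        exact ⟨h1, h2⟩
    · simp
  rw [h, Finset.card_map, gammaStarSnd, conjF, gammaSnd, card_filter_sortedDesc]
  simpa using (Finset.card_le_univ (oddSupp e))

/-- Row `k` of the first component of `Γ*(m)` meets exactly the left columns higher than `k`. Here
`N` is the number of trailing ones of `Γ(m)`; in `gammaFst` a truncated subtraction occurs, which
`hN` makes harmless. -/
theorem gammaStarFst_eq {n : ℕ} (e : Fin n →₀ ℕ) (N k : ℕ)
    (hN : n = d1F e + d2F e + (evenSupp e).card + (oddSupp e).card + N) :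
    gammaStarFst e k = ((leftCols e N).filter fun c => k < colHeight e N c).card := by
  have h : ((leftCols e N).filter fun c => k < colHeight e N c) =
      ((evenSupp e).filter fun i => k < e i / 2 + 1).disjSum
        (Finset.univ.filter fun _ : Fin N => k < 1) := by
    ext c
    rcases c with c | c
    · simp only [inl_mem_leftCols, colHeight_inl, evenSupp, Finset.mem_filter, Finset.mem_univ,
        true_and, Finset.inl_mem_disjSum]
      by_cases h0 : e c = 0 <;> simp [h0]
    · by_cases hk : k = 0 <;> simp [hk]
  have hn : n - ((oddSupp e).card + d1F e + d2F e) = (evenSupp e).card + N := by omega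
  rw [h, Finset.card_disjSum, gammaStarFst, conjF]
  simp only [gammaFst, hn]
  rcases Nat.eq_zero_or_pos k with rfl | hk
  · have : ((Finset.range n).filter fun i => 0 < if i < (evenSupp e).card + N then
        max (sortedDesc ((evenSupp e).val.map fun i => e i / 2 + 1) i) 1 else 0) =
        Finset.range ((evenSupp e).card + N) := by
      ext i
      rw [Finset.mem_filter, Finset.mem_range, Finset.mem_range]
      split_ifs with hi
      · simp only [hi, iff_true]
        exact ⟨by omega, by simp⟩
      · simp [hi]
    rw [this]
    simp
  · rw [← card_filter_sortedDesc (evenSupp e) (fun i => e i / 2 + 1) k ((evenSupp e).card + N) (by omega)]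
    have h1 : ¬ k < 1 := by omega
    rw [Finset.filter_false_of_mem (s := (Finset.univ : Finset (Fin N))) (fun _ _ => h1),
      Finset.card_empty, add_zero]
    refine congrArg Finset.card ?_
    ext i
    rw [Finset.mem_filter, Finset.mem_filter, Finset.mem_range, Finset.mem_range]
    split_ifs with hi
    · simp only [hi, lt_max_iff, h1, or_false, true_and]
      exact ⟨fun h => h.2, fun h => ⟨by omega, h⟩⟩
    · simp [hi]

theorem sum_gammaStar {n : ℕ} (e : Fin n →₀ ℕ) (N k : ℕ)
    (hN : n = d1F e + d2F e + (evenSupp e).card + (oddSupp e).card + N) :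
    ∑ r ∈ Finset.range k, (gammaStarFst e r + gammaStarSnd e r) =
      ∑ c, min (colHeight e N c) k := by
  induction k with
  | zero => simp
  | succ k ih =>
    rw [Finset.sum_range_succ, ih, sum_min_succ, gammaStarFst_eq e N k hN, gammaStarSnd_eq e N k]
    congr 1
    rw [← Finset.card_union_of_disjoint]
    · congr 1
      ext c
      simp only [Finset.mem_union, Finset.mem_filter, Finset.mem_univ, true_and]
      tauto
    · rw [Finset.disjoint_left]
      intro c h1 h2
      simp only [Finset.mem_filter, Finset.mem_univ, true_and] at h1 h2
      exact h2.1 h1.1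

/-- If the coordinates of `z` satisfy the Hall type conditions for a placement into the columns of
`Γ*(m)`, the value `0` being confined to the left component, then `z` is not a zero of `I`. -/
theorem not_zero_of_hall {K : Type*} [Field K] [CharZero K] [DecidableEq K] {n : ℕ}
    {I : Ideal (MvPolynomial (Fin n) K)} (hI : BnInvariantIdeal n K I)
    {P : MvPolynomial (Fin n) K} (hP : P ∈ I) {z : Fin n → K}
    (hz : ∀ f ∈ I, eval z f = 0) {e : Fin n →₀ ℕ}
    (he : coeff e (homogeneousComponent P.totalDegree P) ≠ 0)
    (hwt : (homogeneousComponent P.totalDegree P).vars.card + d1F e + d2F e ≤ n)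
    (H1 : ∀ X : Finset K, 0 ∉ X → (Finset.univ.filter fun j => z j ^ 2 ∈ X).card ≤
      ∑ r ∈ Finset.range X.card, (gammaStarFst e r + gammaStarSnd e r))
    (H2 : ∀ X : Finset K, 0 ∉ X → (Finset.univ.filter fun j => z j ^ 2 ∈ insert 0 X).card ≤
      ∑ r ∈ Finset.range X.card, (gammaStarFst e r + gammaStarSnd e r)
        + gammaStarFst e X.card) : False := by
  set V := (homogeneousComponent P.totalDegree P).vars with hV
  have heP : coeff e P ≠ 0 ∧ e.degree = P.totalDegree := by
    rw [coeff_homogeneousComponent] at he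
    split_ifs at he with h
    · exact ⟨he, h⟩
    · exact absurd rfl he
  have hsV : ∀ i, e i ≠ 0 → i ∈ V := fun i hi =>
    (mem_vars_iff_mem_support i).2 ⟨e, mem_support_iff.2 he, Finsupp.mem_support_iff.2 hi⟩
  have hcs : (V.filter fun i => ¬ e i = 0).card = (evenSupp e).card + (oddSupp e).card := by
    rw [← Finset.card_union_of_disjoint]
    · congr 1
      ext i
      simp only [evenSupp, oddSupp, Finset.mem_union, Finset.mem_filter, Finset.mem_univ,
        true_and]
      constructor
      · rintro ⟨-, h⟩
        rcases Nat.even_or_odd (e i) with h' | h'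
        · exact Or.inl ⟨h, h'⟩
        · exact Or.inr h'
      · rintro (h | h)
        · exact ⟨hsV i h.1, h.1⟩
        · have : e i ≠ 0 := by rintro h0; simp [h0] at h
          exact ⟨hsV i this, this⟩
    · rw [Finset.disjoint_left]
      intro i h1 h2
      simp only [evenSupp, oddSupp, Finset.mem_filter, Finset.mem_univ, true_and] at h1 h2
      exact Nat.not_even_iff_odd.2 h2 h1.2
  have hcV := Finset.card_filter_add_card_filter_not (s := V) (fun i => e i = 0)
  obtain ⟨N, hN⟩ : ∃ N, n = d1F e + d2F e + (evenSupp e).card + (oddSupp e).card + N :=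
    Nat.exists_eq_add_of_le (by omega)
  obtain ⟨κ, hκ1, hκ2, hκ3⟩ := exists_placement (fun j => z j ^ 2) (colHeight e N)
    (leftCols e N) (by rw [sum_colHeight, ← hN])
    (fun X hX => by rw [← sum_gammaStar e N _ hN]; exact H1 X hX)
    (fun X hX => by rw [← sum_gammaStar e N _ hN, ← gammaStarFst_eq e N _ hN]; exact H2 X hX)
  let κ' : Fin n → Option (Fin n) := fun j => (κ j).elim some fun _ => none
  have hκ' : ∀ j c, κ' j = some c ↔ κ j = Sum.inl c := by
    intro j c
    rcases h : κ j with c' | c' <;> simp [κ', h]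
  refine core_perm hI hP hz heP.1 (by rw [← heP.2, Finsupp.degree_eq_sum]) κ' ?_ ?_ ?_ ?_ ?_
  · have hex : ∀ x : Fin N, ∃ j, κ j = Sum.inr x := by
      intro x
      have : 0 < (Finset.univ.filter fun j => κ j = Sum.inr x).card := by
        rw [hκ1]; simp [colHeight]
      obtain ⟨j, hj⟩ := Finset.card_pos.1 this
      exact ⟨j, by simpa using hj⟩
    choose t ht using hex
    have : N ≤ (Finset.univ.filter fun i => κ' i = none).card := by
      rw [← Fintype.card_fin N, ← Finset.card_univ]
      apply Finset.card_le_card_of_injOn t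
      · intro x _
        simp [κ', ht]
      · intro x _ y _ h
        have h1 := ht x
        rw [h, ht y] at h1
        exact (Sum.inr.inj h1).symm
    rw [← hV]
    omega
  · intro c hc
    simp_rw [hκ', hκ1]
    simp [colHeight, hc]
  · intro i c hi hc
    rw [hκ'] at hi
    have h1 := hκ1 (Sum.inl c)
    simp only [colHeight, Sum.elim_inl, hc, if_true, Finset.card_eq_zero,
      Finset.filter_eq_empty_iff] at h1
    exact h1 (Finset.mem_univ i) hi
  · intro i j c hi hj h
    rw [hκ'] at hi hj
    exact hκ2 i j (hi.trans hj.symm) h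
  · intro i c hi hodd h0
    rw [hκ'] at hi
    have := hκ3 i (by simp [h0])
    rw [hi, leftCols, Finset.inl_mem_disjSum, Finset.mem_filter] at this
    exact Nat.not_even_iff_odd.2 hodd this.2

end SpechtBn

/-! ### Hall type conditions from Specht polynomials and from bidominance -/

namespace SpechtBn
open MvPolynomial

theorem conjF_antitone (n : ℕ) (f : ℕ → ℕ) : Antitone (conjF n f) := by
  intro a b hab
  apply Finset.card_le_card
  intro i hi
  rw [Finset.mem_filter] at hi ⊢
  exact ⟨hi.1, lt_of_le_of_lt hab hi.2⟩

/-- A column of a Young diagram is an initial segment of the rows, so at most `k` of its cells can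
be moved up into its first `k` rows. -/
theorem card_column_le {n : ℕ} {f : ℕ → ℕ} (hf : Antitone f) (c k : ℕ) (R : Finset ℕ)
    (hR : R ⊆ (Finset.range n).filter fun r => c < f r) (hk : R.card ≤ k) :
    R.card ≤ ((Finset.range n).filter fun r => c < f r ∧ r < k).card := by
  by_cases h : ∃ r₀ ∈ R, k ≤ r₀
  · obtain ⟨r₀, hr₀, hk₀⟩ := h
    have h0 := Finset.mem_filter.1 (hR hr₀)
    rw [Finset.mem_range] at h0
    calc R.card ≤ (Finset.range k).card := by simpa using hk
      _ ≤ _ := by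
        apply Finset.card_le_card
        intro r hr
        rw [Finset.mem_range] at hr
        rw [Finset.mem_filter, Finset.mem_range]
        exact ⟨by omega, lt_of_lt_of_le h0.2 (hf (by omega)), hr⟩
  · push Not at h
    apply Finset.card_le_card
    intro r hr
    have h0 := Finset.mem_filter.1 (hR hr)
    rw [Finset.mem_filter]
    exact ⟨h0.1, h0.2, h r hr⟩

/-- If the filling `val` has distinct values within each column, then the values in `X` occupy at
most as many cells as there are in the first `|X|` rows. -/
theorem card_cells_le {K : Type*} [DecidableEq K] {n : ℕ} {f : ℕ → ℕ} (hf : Antitone f)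
    (val : ℕ × ℕ → K) (hval : ∀ q ∈ colPairs n f, val q.1 ≠ val q.2) (X : Finset K) :
    ((cellsF n f).filter fun c => val c ∈ X).card ≤ ∑ r ∈ Finset.range X.card, f r := by
  have hcell : ∀ r c, (r, c) ∈ cellsF n f ↔ r < n ∧ c < n ∧ c < f r := by
    intro r c; simp [cellsF, and_assoc]
  calc ((cellsF n f).filter fun c => val c ∈ X).card
      = ∑ c ∈ Finset.range n, ((Finset.range n).filter fun r => c < f r ∧ val (r, c) ∈ X).card := by
        rw [Finset.card_eq_sum_card_fiberwise (f := Prod.snd) (t := Finset.range n)]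
        · apply Finset.sum_congr rfl
          intro c hc
          symm
          apply Finset.card_bij (fun r _ => (r, c))
          · intro r hr
            simp only [Finset.mem_filter, Finset.mem_range, hcell] at hr hc ⊢
            tauto
          · intro a _ b _ h
            exact (Prod.mk.inj h).1
          · rintro ⟨r, c'⟩ h
            simp only [Finset.mem_filter, hcell] at h
            obtain ⟨⟨⟨h1, h2, h3⟩, h4⟩, rfl⟩ := h
            exact ⟨r, by simp [h1, h3, h4], rfl⟩
        · rintro ⟨r, c⟩ h
          have := (Finset.mem_filter.1 h).1
          rw [hcell] at this
          simp [this.2.1]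
    _ ≤ ∑ c ∈ Finset.range n,
          ((Finset.range n).filter fun r => c < f r ∧ r < X.card).card := by
        apply Finset.sum_le_sum
        intro c hc
        apply card_column_le hf
        · intro r hr
          rw [Finset.mem_filter] at hr ⊢
          exact ⟨hr.1, hr.2.1⟩
        · apply Finset.card_le_card_of_injOn (fun r => val (r, c))
          · intro r hr
            exact (Finset.mem_filter.1 hr).2.2
          · have key : ∀ r r', r < r' → r' < n → c < f r' → val (r, c) ≠ val (r', c) := by
              intro r r' hrr hn hcf
              apply hval ((r, c), (r', c))
              have h1 : (r, c) ∈ cellsF n f := (hcell _ _).2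
                ⟨by omega, Finset.mem_range.1 hc, lt_of_lt_of_le hcf (hf hrr.le)⟩
              have h2 : (r', c) ∈ cellsF n f := (hcell _ _).2 ⟨hn, Finset.mem_range.1 hc, hcf⟩
              simp [colPairs, h1, h2, hrr]
            intro r hr r' hr' h
            have h1 := Finset.mem_filter.1 hr
            have h2 := Finset.mem_filter.1 hr'
            rw [Finset.mem_range] at h1 h2
            rcases lt_trichotomy r r' with h3 | h3 | h3
            · exact absurd h (key r r' h3 h2.1 h2.2.1)
            · exact h3
            · exact absurd h.symm (key r' r h3 h1.1 h1.2.1)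
    _ = ∑ r ∈ (Finset.range n).filter (fun r => r < X.card),
          ((Finset.range n).filter fun c => c < f r).card := by
        simp only [Finset.card_filter, Finset.sum_filter]
        rw [Finset.sum_comm]
        apply Finset.sum_congr rfl
        intro r _
        split_ifs with h <;> simp [h]
    _ ≤ ∑ r ∈ (Finset.range n).filter (fun r => r < X.card), f r := by
        apply Finset.sum_le_sum
        intro r _
        calc _ ≤ (Finset.range (f r)).card := Finset.card_le_card (by
              intro c hc
              simpa using (Finset.mem_filter.1 hc).2)
          _ = f r := Finset.card_range _
    _ ≤ ∑ r ∈ Finset.range X.card, f r := by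
        apply Finset.sum_le_sum_of_subset
        intro r hr
        simpa using (Finset.mem_filter.1 hr).2

/-- Nonvanishing of a Specht polynomial at `z` means that its bitableau places the coordinates with
distinct squares in each column and no zero in the right diagram; the Hall type conditions follow
column by column. -/
theorem hall_of_speB_ne_zero {K : Type*} [Field K] [DecidableEq K] {n : ℕ} {f g : ℕ → ℕ}
    (hf : Antitone f) (hg : Antitone g) (bt : Bitableau n f g) (z : Fin n → K)
    (h : eval z (speB n K bt) ≠ 0) :
    (∀ X : Finset K, 0 ∉ X → (Finset.univ.filter fun j => z j ^ 2 ∈ X).card ≤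
      ∑ r ∈ Finset.range X.card, (f r + g r)) ∧
    (∀ X : Finset K, 0 ∉ X → (Finset.univ.filter fun j => z j ^ 2 ∈ insert 0 X).card ≤
      ∑ r ∈ Finset.range X.card, (f r + g r) + f X.card) := by
  simp only [speB, map_mul, map_prod, map_sub, map_pow, eval_X] at h
  rw [mul_ne_zero_iff, mul_ne_zero_iff, Finset.prod_ne_zero_iff, Finset.prod_ne_zero_iff,
    Finset.prod_ne_zero_iff] at h
  obtain ⟨⟨hl, hr⟩, h0⟩ := h
  have hl' := card_cells_le hf (fun c => z (bt.left c) ^ 2) (fun q hq => sub_ne_zero.1 (hl q hq))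
  have hr' := card_cells_le hg (fun c => z (bt.right c) ^ 2) (fun q hq => sub_ne_zero.1 (hr q hq))
  have hcount : ∀ X : Finset K, (Finset.univ.filter fun j => z j ^ 2 ∈ X).card ≤
      ((cellsF n f).filter fun c => z (bt.left c) ^ 2 ∈ X).card +
      ((cellsF n g).filter fun c => z (bt.right c) ^ 2 ∈ X).card := by
    intro X
    have hsub : (Finset.univ.filter fun j => z j ^ 2 ∈ X) ⊆
        ((cellsF n f).filter fun c => z (bt.left c) ^ 2 ∈ X).image bt.left ∪
        ((cellsF n g).filter fun c => z (bt.right c) ^ 2 ∈ X).image bt.right := by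
      intro j hj
      have hj' : z j ^ 2 ∈ X := (Finset.mem_filter.1 hj).2
      obtain ⟨c | c, hc, -⟩ := bt.bij j
      · obtain ⟨hc1, hc2⟩ : c ∈ cellsF n f ∧ bt.left c = j := hc
        exact Finset.mem_union_left _ (Finset.mem_image.2
          ⟨c, Finset.mem_filter.2 ⟨hc1, by rwa [hc2]⟩, hc2⟩)
      · obtain ⟨hc1, hc2⟩ : c ∈ cellsF n g ∧ bt.right c = j := hc
        exact Finset.mem_union_right _ (Finset.mem_image.2
          ⟨c, Finset.mem_filter.2 ⟨hc1, by rwa [hc2]⟩, hc2⟩)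
    exact (Finset.card_le_card hsub).trans ((Finset.card_union_le _ _).trans
      (add_le_add Finset.card_image_le Finset.card_image_le))
  refine ⟨fun X _ => ?_, fun X hX => ?_⟩
  · rw [Finset.sum_add_distrib]
    exact (hcount X).trans (add_le_add (hl' X) (hr' X))
  · have h1 := hcount (insert 0 X)
    have h2 := hl' (insert 0 X)
    have h3 := hr' X
    have h4 : ((cellsF n g).filter fun c => z (bt.right c) ^ 2 ∈ insert 0 X) =
        (cellsF n g).filter fun c => z (bt.right c) ^ 2 ∈ X := by
      apply Finset.filter_congr
      intro c hc
      simp [h0 c hc]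
    rw [Finset.card_insert_of_notMem hX, Finset.sum_range_succ] at h2
    rw [h4] at h1
    rw [Finset.sum_add_distrib]
    omega

/-- The sum of `k` elements of a decreasing list is at most the sum of its first `k` entries. -/
theorem sum_le_sum_getD (l : List ℕ) (hl : l.Pairwise (· ≥ ·)) (m : Multiset ℕ)
    (hm : m ≤ (l : Multiset ℕ)) : m.sum ≤ ∑ j ∈ Finset.range m.card, l.getD j 0 := by
  induction l generalizing m with
  | nil =>
    have : m = 0 := by simpa using hm
    simp [this]
  | cons a l ih =>
    rw [List.pairwise_cons] at hl
    rw [← Multiset.cons_coe] at hm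
    suffices h : ∀ b m', m = b ::ₘ m' → b ≤ a → m' ≤ (l : Multiset ℕ) →
        m.sum ≤ ∑ j ∈ Finset.range m.card, (a :: l).getD j 0 by
      by_cases ha : a ∈ m
      · obtain ⟨m', rfl⟩ := Multiset.exists_cons_of_mem ha
        exact h a m' rfl le_rfl ((Multiset.cons_le_cons_iff a).1 hm)
      · rw [Multiset.le_cons_of_notMem ha] at hm
        rcases Multiset.empty_or_exists_mem m with rfl | ⟨b, hb⟩
        · simp
        · obtain ⟨m', rfl⟩ := Multiset.exists_cons_of_mem hb
          exact h b m' rfl (hl.1 b (Multiset.mem_coe.1 (Multiset.mem_of_le hm hb)))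
            ((Multiset.le_cons_self _ _).trans hm)
    rintro b m' rfl hb hm'
    rw [Multiset.sum_cons, Multiset.card_cons, Finset.sum_range_succ']
    have := ih hl.2 m' hm'
    simp only [List.getD_cons_succ, List.getD_cons_zero]
    omega

theorem sum_le_sum_sortedDesc {M m : Multiset ℕ} (hm : m ≤ M) :
    m.sum ≤ ∑ j ∈ Finset.range m.card, sortedDesc M j := by
  apply sum_le_sum_getD
  · rw [List.pairwise_reverse]
    exact Multiset.pairwise_sort M (· ≤ ·)
  · rwa [Multiset.coe_reverse, Multiset.sort_eq]

theorem card_le_sum_snType {K : Type*} [DecidableEq K] {n : ℕ} (y : Fin n → K) (Y : Finset K) :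
    (Finset.univ.filter fun j => y j ∈ Y).card ≤ ∑ j ∈ Finset.range Y.card, snType y j := by
  have hsn : snType y = sortedDesc ((Finset.univ.image y).val.map fun v =>
      (Finset.univ.filter fun i => y i = v).card) := by
    unfold snType sortedDesc
    congr!
  set Y' := (Finset.univ.image y).filter fun v => v ∈ Y with hY'
  have h1 : (Finset.univ.filter fun j => y j ∈ Y).card =
      (Y'.val.map fun v => (Finset.univ.filter fun i => y i = v).card).sum := by
    rw [Finset.card_eq_sum_card_fiberwise (f := y) (t := Y')]
    · apply Finset.sum_congr rfl
      intro v hv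
      rw [Finset.filter_filter]
      congr 1
      apply Finset.filter_congr
      intro j _
      constructor
      · exact fun h => h.2
      · rintro rfl; exact ⟨(Finset.mem_filter.1 hv).2, rfl⟩
    · intro j hj
      simpa [hY'] using hj
  have h2 := sum_le_sum_sortedDesc (Multiset.map_le_map
    (f := fun v => (Finset.univ.filter fun i => y i = v).card)
    (Finset.val_le_iff.2 (Finset.filter_subset _ _ : Y' ⊆ Finset.univ.image y)))
  rw [← hsn, ← h1, Multiset.card_map] at h2
  refine h2.trans (Finset.sum_le_sum_of_subset ?_)
  apply Finset.range_mono
  exact Finset.card_le_card (fun v hv => (Finset.mem_filter.1 hv).2)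

/-- The bidominance inequalities for `Ω(z)` are the Hall type conditions. For the condition with the
value `0`, either `Λ_k ≤ Ω(z)_k`, and the `k + 1` values together are bounded by the first `k + 1`
parts of `Λ(z²)`, or the number of zeros is at most `Ω(z)_k`. -/
theorem hall_of_bidom {K : Type*} [Field K] [DecidableEq K] {n : ℕ} {f g : ℕ → ℕ} (z : Fin n → K)
    (h : BidomFun (omegaFst z) (omegaSnd z) f g) :
    (∀ X : Finset K, 0 ∉ X → (Finset.univ.filter fun j => z j ^ 2 ∈ X).card ≤
      ∑ r ∈ Finset.range X.card, (f r + g r)) ∧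
    (∀ X : Finset K, 0 ∉ X → (Finset.univ.filter fun j => z j ^ 2 ∈ insert 0 X).card ≤
      ∑ r ∈ Finset.range X.card, (f r + g r) + f X.card) := by
  have hle : ∀ r, snType (fun i => z i ^ 2) r ≤ omegaFst z r + omegaSnd z r := by
    intro r
    simp only [omegaFst, omegaSnd, cutFst, cutSnd]
    split_ifs <;> omega
  have hmin : ∀ r, snType (fun i => z i ^ 2) r ≤ omegaFst z r ∨ zeroCount z ≤ omegaFst z r := by
    intro r
    simp only [omegaFst, cutFst]
    split_ifs
    · exact Or.inr le_rfl
    · exact Or.inl le_rfl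
  have hX : ∀ X : Finset K, (Finset.univ.filter fun j => z j ^ 2 ∈ X).card ≤
      ∑ r ∈ Finset.range X.card, (omegaFst z r + omegaSnd z r) := fun X =>
    (card_le_sum_snType (fun i => z i ^ 2) X).trans (Finset.sum_le_sum fun r _ => hle r)
  refine ⟨fun X _ => (hX X).trans (h.1 _), fun X h0 => le_trans ?_ (h.2 _)⟩
  rcases hmin X.card with h1 | h1
  · have h2 := card_le_sum_snType (fun i => z i ^ 2) (insert 0 X)
    rw [Finset.card_insert_of_notMem h0, Finset.sum_range_succ] at h2
    exact h2.trans (add_le_add (Finset.sum_le_sum fun r _ => hle r) h1)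
  · have h2 : (Finset.univ.filter fun j => z j ^ 2 ∈ insert 0 X) ⊆
        (Finset.univ.filter fun j => z j ^ 2 ∈ X) ∪ Finset.univ.filter fun j => z j = 0 := by
      intro j hj
      have := (Finset.mem_filter.1 hj).2
      rcases Finset.mem_insert.1 this with h | h
      · exact Finset.mem_union_right _ (by simpa using h)
      · exact Finset.mem_union_left _ (by simpa using h)
    have h3 := (Finset.card_le_card h2).trans (Finset.card_union_le _ _)
    have h4 : (Finset.univ.filter fun j => z j = 0).card = zeroCount z := by
      unfold zeroCount
      congr!
    have h5 := hX X
    omega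

end SpechtBn

open SpechtBn in
/-- Corollary 2: `V(I) ⊆ V_{Γ*(m)}` and `V(I)` misses every orbit set `H_{(ϑ,ω)}`
with `(ϑ,ω) ⊴ Γ*(m)`. -/
theorem variety_subset_and_misses_orbitSets {K : Type*} [Field K] [CharZero K] {n : ℕ}
    (I : Ideal (MvPolynomial (Fin n) K)) (hI : BnInvariantIdeal n K I)
    (P : MvPolynomial (Fin n) K) (hP : P ∈ I) (e : Fin n →₀ ℕ)
    (he : MvPolynomial.coeff e
      (MvPolynomial.homogeneousComponent P.totalDegree P) ≠ 0)
    (hwt : (MvPolynomial.homogeneousComponent P.totalDegree P).vars.card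
        + d1F e + d2F e ≤ n) :
    {z : Fin n → K | ∀ f ∈ I, MvPolynomial.eval z f = 0}
        ⊆ spechtVariety n K (gammaStarFst e) (gammaStarSnd e) ∧
    ∀ q : Bipartition n, BidomFun q.l q.m (gammaStarFst e) (gammaStarSnd e) →
      {z : Fin n → K | ∀ f ∈ I, MvPolynomial.eval z f = 0}
          ∩ orbitSet n K q.l q.m = ∅ := by
  classical
  have key : ∀ z : Fin n → K, (∀ f ∈ I, MvPolynomial.eval z f = 0) →
      (∀ X : Finset K, 0 ∉ X → (Finset.univ.filter fun j => z j ^ 2 ∈ X).card ≤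
        ∑ r ∈ Finset.range X.card, (gammaStarFst e r + gammaStarSnd e r)) ∧
      (∀ X : Finset K, 0 ∉ X → (Finset.univ.filter fun j => z j ^ 2 ∈ insert 0 X).card ≤
        ∑ r ∈ Finset.range X.card, (gammaStarFst e r + gammaStarSnd e r)
          + gammaStarFst e X.card) → False :=
    fun z hz h => not_zero_of_hall hI hP hz he hwt h.1 h.2
  refine ⟨fun z hz => ?_, fun q hq => ?_⟩
  · have hle : spechtIdeal n K (gammaStarFst e) (gammaStarSnd e) ≤
        RingHom.ker (MvPolynomial.eval z) := by
      rw [spechtIdeal, Ideal.span_le]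
      rintro _ ⟨bt, rfl⟩
      by_contra h
      exact key z hz (hall_of_speB_ne_zero (conjF_antitone _ _) (conjF_antitone _ _) bt z h)
    exact fun f hf => hle hf
  · rw [Set.eq_empty_iff_forall_notMem]
    rintro z ⟨hz, h1, h2⟩
    refine key z hz (hall_of_bidom z ?_)
    rw [h1, h2]
    exact hq
end
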